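/- arXiv:2211.10313 — 8 statements merged into one kernel-verified Lean document; each statement's English description precedes it below -/
import Mathlib

section
/- Let n ≥ 2, let a be the smallest prime divisor of n, let d be an integer with d ≥ n − (n/a), and let q be any prime power. Then σ(M_n(q)) ≤ q^{nd}, where M_n(q) is the ring of n×n matrices over F_q, and equality holds only when n = 2, q = 2, and d = 1. -/
/-!
Let `V = F ^ n`, let `q = |F|`, and let `K` be the extension of `F` of degree `a`, the smallest
prime divisor of `n`; put `m = n / a`. The ring `End F V` is covered by two families of proper
subrings: the stabilizers of the nonzero subspaces of dimension at most `n / 2`, and the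
centralizers of the images of the embeddings `K → End F V`. Indeed, if some nonzero polynomial of
degree at most `n / 2` is singular at an endomorphism `M`, a vector in its kernel generates a small
`M`-invariant subspace. Otherwise the minimal polynomial of `M` is irreducible; its degree exceeds
`n / 2` and divides `n`, so `F[M]` is a field of degree `n` over `F`. It contains a copy of `K`, and
`M` centralizes that copy (`exists_invariant_or_algHom`).

Both families are counted through bases. Pairs of an embedding and a `K`-basis inject into the
`F`-bases of `V`, so the number of embeddings is at most the product of `q ^ n - q ^ k` over
`k < n` with `a ∤ k`, hence at most `q ^ (n * (n - m))` (`card_algHom_mul_le`, `prod_split_le`).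
Composition with an automorphism of `K` preserves the image, so there are at most half as many
centralizers (`two_mul_card_cent_le`). Pairs of a `k`-dimensional subspace and a basis of it inject
into the independent `k`-tuples, which gives at most `q ^ (k * (n - k + 1))` such subspaces
(`card_subspaces_le`). For `n ≥ 3` the sum of these over `k ≤ n / 2` is less than half of
`q ^ (n * (n - m))`, so the inequality is strict. For `n = 2` the unsimplified counts give a cover
of size at most `(q ^ 2 + q + 2) / 2`, which is at most `q ^ 2` with equality only for `q = 2`.
-/

open scoped Classical

noncomputable section

/-- A (finite) cover of a not-necessarily-unital ring: a finite collection of proper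
subrings whose set-theoretic union is all of `R`. -/
def IsRingCover (R : Type*) [NonUnitalRing R] (C : Finset (NonUnitalSubring R)) : Prop :=
  (∀ S ∈ C, S ≠ (⊤ : NonUnitalSubring R)) ∧ ∀ r : R, ∃ S ∈ C, r ∈ S

/-- The covering number `σ(R)`: the least cardinality of a cover of `R`,
or `⊤` if no cover exists. -/
noncomputable def coveringNumber (R : Type*) [NonUnitalRing R] : ℕ∞ :=
  sInf {c : ℕ∞ | ∃ C : Finset (NonUnitalSubring R), IsRingCover R C ∧ (C.card : ℕ∞) = c}

/-- `R` is σ-elementary if `σ(R) < σ(R/I)` for every nonzero two-sided ideal `I`. -/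
def IsSigmaElementary (R : Type*) [NonUnitalRing R] : Prop :=
  ∀ I : TwoSidedIdeal R, I ≠ ⊥ → coveringNumber R < coveringNumber I.ringCon.Quotient

/-- The AGL-type ring `A(n, F1, F2)` as a subring of `(n+1) × (n+1)` matrices over `F`:
top-left `n × n` block with entries in `F1`, arbitrary top-right column, zero bottom-left
row, bottom-right entry in `F2`. -/
def AGL (n : ℕ) {F : Type*} [Field F] (F1 F2 : Subfield F) :
    Subring (Matrix (Fin (n + 1)) (Fin (n + 1)) F) where
  carrier := {M | (∀ i j : Fin n, M i.castSucc j.castSucc ∈ F1) ∧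
      (∀ j : Fin n, M (Fin.last n) j.castSucc = 0) ∧
      M (Fin.last n) (Fin.last n) ∈ F2}
  zero_mem' := by
    refine ⟨fun i j => ?_, fun j => rfl, ?_⟩
    · exact zero_mem F1
    · exact zero_mem F2
  one_mem' := by
    refine ⟨fun i j => ?_, fun j => ?_, ?_⟩
    · rw [Matrix.one_apply]
      split
      · exact one_mem F1
      · exact zero_mem F1
    · exact Matrix.one_apply_ne (Fin.castSucc_lt_last j).ne'
    · rw [Matrix.one_apply_eq]; exact one_mem F2
  add_mem' := by
    rintro a b ⟨ha1, ha2, ha3⟩ ⟨hb1, hb2, hb3⟩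
    refine ⟨fun i j => add_mem (ha1 i j) (hb1 i j), fun j => ?_, add_mem ha3 hb3⟩
    rw [Matrix.add_apply, ha2 j, hb2 j, add_zero]
  neg_mem' := by
    rintro a ⟨ha1, ha2, ha3⟩
    refine ⟨fun i j => neg_mem (ha1 i j), fun j => ?_, neg_mem ha3⟩
    rw [Matrix.neg_apply, ha2 j, neg_zero]
  mul_mem' := by
    rintro a b ⟨ha1, ha2, ha3⟩ ⟨hb1, hb2, hb3⟩
    refine ⟨fun i j => ?_, fun j => ?_, ?_⟩
    · rw [Matrix.mul_apply, Fin.sum_univ_castSucc, hb2 j, mul_zero, add_zero]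
      exact sum_mem fun k _ => mul_mem (ha1 i k) (hb1 k j)
    · rw [Matrix.mul_apply, Fin.sum_univ_castSucc, hb2 j, mul_zero, add_zero]
      exact Finset.sum_eq_zero fun k _ => by rw [ha2 k, zero_mul]
    · rw [Matrix.mul_apply, Fin.sum_univ_castSucc]
      have h0 : ∑ k : Fin n, a (Fin.last n) k.castSucc * b k.castSucc (Fin.last n) = 0 :=
        Finset.sum_eq_zero fun k _ => by rw [ha2 k, zero_mul]
      rw [h0, zero_add]
      exact mul_mem ha3 hb3

/-- The Gaussian (q-)binomial coefficient, via the Pascal-type recurrence. -/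
def gaussBinom (q : ℕ) : ℕ → ℕ → ℕ
  | _, 0 => 1
  | 0, _ + 1 => 0
  | n + 1, k + 1 => gaussBinom q n k + q ^ (k + 1) * gaussBinom q n (k + 1)

/-- The order of `GL(N, Q)` for a prime power `Q`. -/
def GLcard (N Q : ℕ) : ℕ := ∏ k ∈ Finset.range N, (Q ^ N - Q ^ k)

namespace MatrixCover

open Module Polynomial

/-! ### Numerical estimates -/

/-- The exponents `k * (n - k + 1)` increase strictly for `2 * k ≤ n`, so the sum is dominated by
twice its last term; the `+ 1` yields the strict inequality needed for `n ≥ 3`. -/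
lemma sum_pow_le (q n : ℕ) (hq : 2 ≤ q) (j : ℕ) (hj : 2 * j ≤ n) :
    ∑ k ∈ Finset.Icc 1 j, q ^ (k * (n - k + 1)) + 1 ≤ 2 * q ^ (j * (n - j + 1)) := by
  induction j with
  | zero => simp
  | succ j ih =>
    have ih := ih (by omega)
    rw [Finset.sum_Icc_succ_top (by omega)]
    have h : j * (n - j + 1) + 1 ≤ (j + 1) * (n - (j + 1) + 1) := by
      obtain ⟨t, rfl⟩ : ∃ t, n = j + 1 + t := ⟨n - (j + 1), by omega⟩
      have e1 : j + 1 + t - j = t + 1 := by omega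
      have e2 : j + 1 + t - (j + 1) = t := by omega
      rw [e1, e2]
      nlinarith
    have h1 : q ^ (j * (n - j + 1)) * 2 ≤ q ^ ((j + 1) * (n - (j + 1) + 1)) :=
      (Nat.mul_le_mul_left _ hq).trans
        ((pow_succ q _).symm.le.trans (Nat.pow_le_pow_right (by omega) h))
    omega

lemma exponent_bound (n m : ℕ) (hn : 3 ≤ n) (hm : m = n / 2) :
    m * (n - m + 1) + 2 ≤ n * (n - m) := by
  obtain ⟨t, rfl⟩ : ∃ t, n = m + t := ⟨n - m, by omega⟩
  have e : m + t - m = t := by omega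
  rw [e]
  have h1 : m ≤ t := by omega
  have h2 : 2 ≤ t := by omega
  nlinarith

/-- Split `range (a * m)` into blocks of length `a`; keep the first factor of each block and bound
the others by `Q`. -/
lemma prod_split_le (Q q a m : ℕ) (ha : 1 ≤ a) :
    ∏ k ∈ Finset.range (a * m), (Q - q ^ k) ≤
      (∏ i ∈ Finset.range m, (Q - (q ^ a) ^ i)) * Q ^ ((a - 1) * m) := by
  induction m with
  | zero => simp
  | succ m ih =>
    rw [Nat.mul_succ, Finset.prod_range_add, Finset.prod_range_succ _ m]
    obtain ⟨b, rfl⟩ : ∃ b, a = b + 1 := ⟨a - 1, by omega⟩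
    have h : ∏ x ∈ Finset.range (b + 1), (Q - q ^ ((b + 1) * m + x)) ≤
        (Q - (q ^ (b + 1)) ^ m) * Q ^ b := by
      rw [Finset.prod_range_succ', mul_comm]
      refine Nat.mul_le_mul (by simp [pow_mul]) ?_
      calc _ ≤ ∏ _x ∈ Finset.range b, Q := Finset.prod_le_prod' fun _ _ => Nat.sub_le _ _
        _ = _ := by simp
    calc _ ≤ _ := Nat.mul_le_mul ih h
      _ = _ := by simp only [Nat.add_sub_cancel]; rw [Nat.mul_succ, pow_add]; ring

/-! ### Counting subspaces and embedded fields -/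

variable {F V : Type} [Field F] [Fintype F] [AddCommGroup V] [Module F V] [Finite V]

/-- Double counting of pairs (subspace of dimension `k`, ordered basis of it): the basis alone
determines the pair. -/
lemma card_subspaces_mul_le (k : ℕ) (hk : k ≤ finrank F V) :
    Nat.card {W : Submodule F V // finrank F W = k} *
        ∏ i : Fin k, (Fintype.card F ^ k - Fintype.card F ^ (i : ℕ)) ≤
      ∏ i : Fin k, (Fintype.card F ^ finrank F V - Fintype.card F ^ (i : ℕ)) := by
  have := Fintype.ofFinite {W : Submodule F V // finrank F W = k}
  rw [← card_linearIndependent hk]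
  have hW (W : {W : Submodule F V // finrank F W = k}) :
      Nat.card {s : Fin k → W.1 // LinearIndependent F s} =
        ∏ i : Fin k, (Fintype.card F ^ k - Fintype.card F ^ (i : ℕ)) := by
    rw [card_linearIndependent W.2.ge, W.2]
  have hs : Nat.card (Σ W : {W : Submodule F V // finrank F W = k},
      {s : Fin k → W.1 // LinearIndependent F s}) =
      Nat.card {W : Submodule F V // finrank F W = k} *
        ∏ i : Fin k, (Fintype.card F ^ k - Fintype.card F ^ (i : ℕ)) := by
    rw [Nat.card_sigma]
    simp [hW]
  rw [← hs]
  refine Nat.card_le_card_of_injective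
    (fun p => ⟨fun i => (p.2.1 i : V), p.2.2.map' p.1.1.subtype p.1.1.ker_subtype⟩) ?_
  have hspan (p : Σ W : {W : Submodule F V // finrank F W = k},
      {s : Fin k → W.1 // LinearIndependent F s}) :
      Submodule.span F (Set.range fun i => (p.2.1 i : V)) = p.1.1 := by
    have h := p.2.2.span_eq_top_of_card_eq_finrank' (by simp [p.1.2])
    have h' := congrArg (Submodule.map p.1.1.subtype) h
    rw [Submodule.map_span, Submodule.map_top, Submodule.range_subtype, ← Set.range_comp] at h'
    exact h'
  intro p p' h
  have h' : (fun i => (p.2.1 i : V)) = fun i => (p'.2.1 i : V) := congrArg Subtype.val h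
  have hw : p.1 = p'.1 := Subtype.ext (by rw [← hspan p, ← hspan p', h'])
  obtain ⟨W, s, hs⟩ := p
  obtain ⟨W', s', hs'⟩ := p'
  obtain rfl : W = W' := hw
  have : s = s' := funext fun i => Subtype.ext (congrFun h' i)
  subst this
  rfl

lemma card_subspaces_le (k : ℕ) (hk : k ≤ finrank F V) :
    Nat.card {W : Submodule F V // finrank F W = k} ≤
      Fintype.card F ^ (k * (finrank F V - k + 1)) := by
  have hq : 2 ≤ Fintype.card F := Fintype.one_lt_card
  set q := Fintype.card F
  set n := finrank F V
  have h := card_subspaces_mul_le (F := F) (V := V) k hk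
  have h1 : q ^ (k * (k - 1)) ≤ ∏ i : Fin k, (q ^ k - q ^ (i : ℕ)) := by
    calc q ^ (k * (k - 1)) = ∏ _i : Fin k, q ^ (k - 1) := by
          simp [← pow_mul, mul_comm]
      _ ≤ _ := Finset.prod_le_prod' fun i _ => by
          have hi := i.2
          have a1 : q ^ (i : ℕ) ≤ q ^ (k - 1) := Nat.pow_le_pow_right (by omega) (by omega)
          have a2 : q ^ (k - 1) * 2 ≤ q ^ k := by
            calc _ ≤ q ^ (k - 1) * q := Nat.mul_le_mul_left _ hq
              _ = q ^ k := by rw [← pow_succ]; congr 1; omega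
          omega
  have h2 : ∏ i : Fin k, (q ^ n - q ^ (i : ℕ)) ≤ q ^ (k * n) := by
    calc _ ≤ ∏ _i : Fin k, q ^ n := Finset.prod_le_prod' fun i _ => Nat.sub_le _ _
      _ = _ := by simp [← pow_mul, mul_comm]
  have h3 : k * n = k * (n - k + 1) + k * (k - 1) := by
    rcases k with _ | k
    · simp
    · rw [← mul_add]; congr 1; omega
  have hpos : 0 < q ^ (k * (k - 1)) := by positivity
  refine Nat.le_of_mul_le_mul_right ?_ hpos
  rw [← pow_add, ← h3]
  exact (Nat.mul_le_mul_left _ h1).trans (h.trans h2)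

variable {K : Type} [Field K] [Algebra F K]

omit [Fintype F] [Finite V] in
/-- `V` is a `K`-vector space through `φ`. -/
lemma finrank_dvd_of_algHom (φ : K →ₐ[F] End F V) : finrank F K ∣ finrank F V := by
  let : Module K V := Module.compHom V φ.toRingHom
  have hs (x : K) (v : V) : x • v = φ x v := rfl
  have : IsScalarTower F K V := ⟨fun c x v => by simp [hs]⟩
  exact ⟨_, (finrank_mul_finrank F K V).symm⟩

/-- The left side counts the `K`-bases of `V` for the `K`-structure given by `φ`; multiplying such a
basis with an `F`-basis of `K` gives an `F`-independent family. -/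
lemma card_family_ge [Finite K] {ι : Type} (b : Basis ι F K) (φ : K →ₐ[F] End F V) (m : ℕ)
    (hm : finrank F K * m = finrank F V) :
    ∏ i ∈ Finset.range m, (Fintype.card F ^ finrank F V - (Fintype.card F ^ finrank F K) ^ i) ≤
      Nat.card {v : Fin m → V // LinearIndependent F fun p : ι × Fin m => φ (b p.1) (v p.2)} := by
  let := Fintype.ofFinite K
  let : Module K V := Module.compHom V φ.toRingHom
  have hs (x : K) (v : V) : x • v = φ x v := rfl
  have : IsScalarTower F K V := ⟨fun c x v => by simp [hs]⟩
  have hpos : 0 < finrank F K := finrank_pos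
  have hKV : finrank K V = m := by
    have := finrank_mul_finrank F K V
    rw [← hm] at this
    exact Nat.eq_of_mul_eq_mul_left hpos this
  have hK : Fintype.card K = Fintype.card F ^ finrank F K := Module.card_eq_pow_finrank
  have h := card_linearIndependent (K := K) (V := V) hKV.ge
  rw [hKV, hK, ← pow_mul, hm,
    Fin.prod_univ_eq_prod_range
      (fun i => Fintype.card F ^ finrank F V - (Fintype.card F ^ finrank F K) ^ i)] at h
  rw [← h]
  refine Nat.card_le_card_of_injective
    (fun s => ⟨s.1, linearIndependent_smul b.linearIndependent s.2⟩) ?_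
  intro s s' hss
  exact Subtype.ext (by simpa using hss)

/-- Ordered bases of `V`, indexed by an arbitrary type of the right size. -/
lemma card_bases {ι : Type} (e : Fin (finrank F V) ≃ ι) :
    Nat.card {s : ι → V // LinearIndependent F s} =
      ∏ k ∈ Finset.range (finrank F V), (Fintype.card F ^ finrank F V - Fintype.card F ^ k) := by
  have h := card_linearIndependent (K := F) (V := V) le_rfl
  rw [Fin.prod_univ_eq_prod_range
      (fun i => Fintype.card F ^ finrank F V - Fintype.card F ^ i)] at h
  rw [← h]
  refine Nat.card_congr ((Equiv.arrowCongr e.symm (Equiv.refl V)).subtypeEquiv fun s => ?_)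
  exact (linearIndependent_equiv e).symm

omit [Fintype F] [Finite V] in
/-- An embedding `φ` and vectors `v i` are determined by the vectors `φ (b j) (v i)`, as long as
these form a basis: linearity recovers `v i = φ 1 (v i)`, and then `φ x` is known on the basis. -/
lemma algHom_family_ext {ι κ : Type} [Fintype ι] [Fintype κ] (b : Basis ι F K)
    (hcard : Fintype.card (ι × κ) = finrank F V) [FiniteDimensional F V]
    (φ φ' : K →ₐ[F] End F V) (v v' : κ → V)
    (hv : LinearIndependent F fun p : ι × κ => φ (b p.1) (v p.2))
    (hx : ∀ j i, φ (b j) (v i) = φ' (b j) (v' i)) : φ = φ' ∧ v = v' := by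
  have hlin (i : κ) (x : K) : φ x (v i) = φ' x (v' i) := by
    have : (LinearMap.applyₗ (v i)).comp φ.toLinearMap =
        (LinearMap.applyₗ (v' i)).comp φ'.toLinearMap := b.ext fun j => by simpa using hx j i
    simpa using LinearMap.congr_fun this x
  have hvv : v = v' := funext fun i => by simpa using hlin i 1
  subst hvv
  have hspan := hv.span_eq_top_of_card_eq_finrank' hcard
  refine ⟨AlgHom.ext fun x => LinearMap.ext_on hspan ?_, rfl⟩
  rintro _ ⟨p, rfl⟩
  have e1 := hlin p.2 (x * b p.1)
  rw [map_mul, map_mul, Module.End.mul_apply, Module.End.mul_apply, ← hlin p.2 (b p.1)] at e1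
  exact e1

omit [Fintype F] in
lemma finite_algHom [Finite K] : Finite (K →ₐ[F] End F V) :=
  have : Finite (End F V) := DFunLike.finite _
  DFunLike.finite _

/-- Double counting of pairs (embedding `φ : K → End F V`, `K`-basis of `V` for `φ`): by
`algHom_family_ext` these inject into the ordered `F`-bases of `V`. -/
lemma card_algHom_mul_le [Finite K] (m : ℕ) (hm : finrank F K * m = finrank F V) :
    Nat.card (K →ₐ[F] End F V) *
      ∏ i ∈ Finset.range m, (Fintype.card F ^ finrank F V - (Fintype.card F ^ finrank F K) ^ i) ≤
    ∏ k ∈ Finset.range (finrank F V), (Fintype.card F ^ finrank F V - Fintype.card F ^ k) := by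
  have := finite_algHom (F := F) (V := V) (K := K)
  let := Fintype.ofFinite (K →ₐ[F] End F V)
  let b := finBasis F K
  rw [← card_bases ((finCongr hm.symm).trans finProdFinEquiv.symm)]
  have hsum : Nat.card (K →ₐ[F] End F V) *
      ∏ i ∈ Finset.range m, (Fintype.card F ^ finrank F V - (Fintype.card F ^ finrank F K) ^ i) ≤
      Nat.card (Σ φ : K →ₐ[F] End F V, {v : Fin m → V //
        LinearIndependent F fun p : Fin (finrank F K) × Fin m => φ (b p.1) (v p.2)}) := by
    rw [Nat.card_sigma, Nat.card_eq_fintype_card, ← Finset.card_univ, ← smul_eq_mul]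
    exact Finset.card_nsmul_le_sum _ _ _ fun φ _ => card_family_ge b φ m hm
  refine hsum.trans (Nat.card_le_card_of_injective (fun p => ⟨_, p.2.2⟩) ?_)
  rintro ⟨φ, v, hv⟩ ⟨φ', v', hv'⟩ hp
  obtain ⟨rfl, rfl⟩ := algHom_family_ext b (by simp [hm]) φ φ' v v' hv
    fun j i => congrFun (Subtype.ext_iff.1 hp) (j, i)
  rfl

/-! ### Covering the endomorphism ring -/

/-- The ring of endomorphisms mapping the subspace `W` into itself. -/
def stab (W : Submodule F V) : NonUnitalSubring (End F V) where
  carrier := {f | ∀ w ∈ W, f w ∈ W}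
  zero_mem' := fun w _ => by simp
  add_mem' := fun hf hg w hw => W.add_mem (hf w hw) (hg w hw)
  neg_mem' := fun hf w hw => W.neg_mem (hf w hw)
  mul_mem' := fun hf hg w hw => hf _ (hg w hw)

/-- The centralizer in `End F V` of the image of a field `K` acting on `V`. -/
def cent (φ : K →ₐ[F] End F V) : NonUnitalSubring (End F V) :=
  NonUnitalSubring.centralizer (Set.range φ)

omit [Fintype F] [Finite V] in
/-- A rank-one map sending a vector of `W` outside `W` does not stabilize `W`. -/
lemma stab_ne_top (W : Submodule F V) (h0 : W ≠ ⊥) (h1 : W ≠ ⊤) : stab W ≠ ⊤ := by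
  intro h
  obtain ⟨w, hw, hw0⟩ := W.exists_mem_ne_zero_of_ne_bot h0
  obtain ⟨u, hu⟩ : ∃ u, u ∉ W := by
    by_contra! hc
    exact h1 (Submodule.eq_top_iff'.2 hc)
  obtain ⟨d, hd⟩ : ∃ d : Dual F V, d w ≠ 0 := by
    by_contra! hc
    exact hw0 ((forall_dual_apply_eq_zero_iff F w).1 hc)
  have hm : d.smulRight u ∈ stab W := h ▸ NonUnitalSubring.mem_top _
  have := hm w hw
  rw [LinearMap.smulRight_apply] at this
  exact hu ((W.smul_mem_iff hd).1 this)

omit [Fintype F] in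
/-- If all rank-one maps `d(·) v` commuted with `φ x`, then `φ x v` would lie on the line of `v` for
every `x`, whereas `x ↦ φ x v` is injective and `K` has dimension at least two. -/
lemma cent_ne_top [Nontrivial V] (φ : K →ₐ[F] End F V) (hK : 2 ≤ finrank F K) :
    cent φ ≠ ⊤ := by
  intro h
  obtain ⟨v, hv⟩ := exists_ne (0 : V)
  obtain ⟨d, hd⟩ : ∃ d : Dual F V, d v ≠ 0 := by
    by_contra! hc
    exact hv ((forall_dual_apply_eq_zero_iff F v).1 hc)
  let L : K →ₗ[F] V := (LinearMap.applyₗ v).comp φ.toLinearMap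
  have hL (x : K) : L x = φ x v := rfl
  have hinj : Function.Injective L := by
    rw [← LinearMap.ker_eq_bot, LinearMap.ker_eq_bot']
    intro x hx
    by_contra hx0
    apply hv
    have : φ (x⁻¹ * x) v = 0 := by
      rw [map_mul, Module.End.mul_apply, ← hL, hx, map_zero]
    simpa [inv_mul_cancel₀ hx0] using this
  have hran : LinearMap.range L ≤ Submodule.span F {v} := by
    rintro _ ⟨x, rfl⟩
    have hm : d.smulRight v ∈ cent φ := h ▸ NonUnitalSubring.mem_top _
    have hc := NonUnitalSubring.mem_centralizer_iff.1 hm (φ x) ⟨x, rfl⟩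
    have hc := LinearMap.congr_fun hc v
    simp only [Module.End.mul_apply, LinearMap.smulRight_apply, map_smul] at hc
    rw [hL, Submodule.mem_span_singleton]
    exact ⟨(d v)⁻¹ * d (φ x v), by rw [mul_smul, ← hc, inv_smul_smul₀ hd]⟩
  have h1 := LinearMap.finrank_range_of_inj hinj
  have h2 := Submodule.finrank_mono hran
  rw [finrank_span_singleton hv] at h2
  omega

omit [Fintype F] [Finite V] in
/-- The cyclic subspace `F[M] v` has dimension at most `deg g` if `g(M) v = 0`. -/
lemma exists_invariant_of_ker (M : End F V) (g : F[X]) (hg : g ≠ 0) (v : V) (hv : v ≠ 0)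
    (h : aeval M g v = 0) :
    ∃ W : Submodule F V, W ≠ ⊥ ∧ finrank F W ≤ g.natDegree ∧ M ∈ stab W := by
  let L : F[X] →ₗ[F] V := (LinearMap.applyₗ v).comp (aeval M).toLinearMap
  have hL (p : F[X]) : L p = aeval M p v := rfl
  refine ⟨LinearMap.range L, ?_, ?_, ?_⟩
  · intro hb
    have : L 1 ∈ LinearMap.range L := ⟨1, rfl⟩
    rw [hb, Submodule.mem_bot, hL] at this
    exact hv (by simpa using this)
  · have hle : LinearMap.range L ≤ (degreeLT F g.natDegree).map L := by
      rintro _ ⟨p, rfl⟩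
      refine ⟨p % g, ?_, ?_⟩
      · rw [SetLike.mem_coe, mem_degreeLT, ← degree_eq_natDegree hg]
        exact degree_mod_lt p hg
      · conv_rhs => rw [← EuclideanDomain.div_add_mod p g, mul_comm]
        simp [hL, h]
    have hfin : finrank F (degreeLT F g.natDegree) = g.natDegree := by
      rw [(degreeLTEquiv F g.natDegree).finrank_eq]; simp
    have : Module.Finite F (degreeLT F g.natDegree) :=
      Module.Finite.equiv (degreeLTEquiv F g.natDegree).symm
    calc _ ≤ _ := Submodule.finrank_mono hle
      _ ≤ _ := Submodule.finrank_map_le _ _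
      _ = _ := hfin
  · rintro _ ⟨p, rfl⟩
    exact ⟨X * p, by simp [hL]⟩

/-- Either `M` has a nonzero invariant subspace of at most half the dimension, or `F[M]` is a field of
degree `finrank F V` over `F`, so it contains a copy of `K`, which `M` centralizes. -/
lemma exists_invariant_or_algHom [Finite K] [Nontrivial V] (hK : finrank F K ∣ finrank F V)
    (M : End F V) :
    (∃ W : Submodule F V, W ≠ ⊥ ∧ finrank F W ≤ finrank F V / 2 ∧ M ∈ stab W) ∨
      ∃ φ : K →ₐ[F] End F V, M ∈ cent φ := by
  have hM_int : IsIntegral F M := Algebra.IsIntegral.isIntegral M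
  have hμ0 : minpoly F M ≠ 0 := minpoly.ne_zero hM_int
  have hdeg : (minpoly F M).natDegree ≤ finrank F V := by
    have h := natDegree_le_of_dvd (LinearMap.minpoly_dvd_charpoly M)
      (LinearMap.charpoly_monic M).ne_zero
    rwa [LinearMap.charpoly_natDegree] at h
  -- Everything reduces to a nonzero polynomial of degree at most half, singular at `M`.
  by_cases hs : ∃ g : F[X], g ≠ 0 ∧ g.natDegree ≤ finrank F V / 2 ∧ ∃ v ≠ 0, aeval M g v = 0
  · obtain ⟨g, hg, hgd, v, hv, h⟩ := hs
    obtain ⟨W, h1, h2, h3⟩ := exists_invariant_of_ker M g hg v hv h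
    exact Or.inl ⟨W, h1, h2.trans hgd, h3⟩
  right
  push Not at hs
  have hirr : Irreducible (minpoly F M) := by
    refine ⟨minpoly.not_isUnit F M, ?_⟩
    -- A factor that is invertible at `M` has a cofactor vanishing at `M`.
    have key (g h : F[X]) (hgh : minpoly F M = g * h)
        (hgd : g.natDegree ≤ finrank F V / 2) : IsUnit g := by
      have hg0 : g ≠ 0 := fun h0 => hμ0 (by rw [hgh, h0, zero_mul])
      have hh0 : h ≠ 0 := fun h0 => hμ0 (by rw [hgh, h0, mul_zero])
      have hz : aeval M h = 0 := by
        ext v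
        by_contra hne
        refine hs g hg0 hgd _ hne ?_
        rw [← Module.End.mul_apply, ← map_mul, ← hgh, minpoly.aeval, LinearMap.zero_apply]
      have hd := natDegree_le_of_dvd (minpoly.dvd F M hz) hh0
      rw [hgh, natDegree_mul hg0 hh0] at hd
      exact isUnit_iff_degree_eq_zero.2 (by
        rw [degree_eq_natDegree hg0]; exact_mod_cast (by omega : g.natDegree = 0))
    intro g h hgh
    have hg0 : g ≠ 0 := fun h0 => hμ0 (by rw [hgh, h0, zero_mul])
    have hh0 : h ≠ 0 := fun h0 => hμ0 (by rw [hgh, h0, mul_zero])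
    rw [hgh, natDegree_mul hg0 hh0] at hdeg
    rcases le_total g.natDegree h.natDegree with hle | hle
    · exact Or.inl (key g h hgh (by omega))
    · exact Or.inr (key h g (by rw [hgh, mul_comm]) (by omega))
  have : Fact (Irreducible (minpoly F M)) := ⟨hirr⟩
  let ψ : AdjoinRoot (minpoly F M) →ₐ[F] End F V :=
    Ideal.Quotient.liftₐ (Ideal.span {minpoly F M}) (aeval M) fun p hp => by
      obtain ⟨r, rfl⟩ := Ideal.mem_span_singleton.1 hp
      rw [map_mul, minpoly.aeval, zero_mul]
  let B := AdjoinRoot.powerBasis hμ0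
  have hL : finrank F (AdjoinRoot (minpoly F M)) = (minpoly F M).natDegree := by
    rw [B.finrank, AdjoinRoot.powerBasis_dim]
  have := B.finite
  have : Finite (AdjoinRoot (minpoly F M)) := Module.finite_of_finite F
  -- The degree divides `finrank F V` and exceeds half of it.
  have hn : (minpoly F M).natDegree = finrank F V := by
    obtain ⟨r, hr⟩ := finrank_dvd_of_algHom ψ
    rw [hL] at hr
    have hgt : ¬ (minpoly F M).natDegree ≤ finrank F V / 2 := by
      intro hle
      obtain ⟨v, hv⟩ := exists_ne (0 : V)
      exact hs _ hμ0 hle v hv (by simp)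
    have hpos : 0 < finrank F V := finrank_pos
    rcases r with _ | _ | r
    · omega
    · omega
    · exfalso
      have : (minpoly F M).natDegree * 2 ≤ finrank F V := by
        rw [hr]; exact Nat.mul_le_mul_left _ (by omega)
      omega
  obtain ⟨θ⟩ := FiniteField.nonempty_algHom_of_finrank_dvd (F := F) (K := K)
    (L := AdjoinRoot (minpoly F M)) (by rw [hL, hn]; exact hK)
  refine ⟨ψ.comp θ, NonUnitalSubring.mem_centralizer_iff.2 ?_⟩
  rintro _ ⟨x, rfl⟩
  have hM : ψ (AdjoinRoot.root _) = M := by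
    change aeval M X = M
    simp
  have hc := congrArg ψ (mul_comm (θ x) (AdjoinRoot.root _))
  rw [map_mul, map_mul, hM] at hc
  exact hc


/-! ### Size of the cover -/

omit [Fintype F] in
/-- An embedding and its composite with a nontrivial automorphism of `K` have the same image, so
every centralizer arises from at least two embeddings. -/
lemma two_mul_card_cent_le [Finite K] [Nontrivial V] (hK : 2 ≤ finrank F K) :
    2 * (Set.range (cent (F := F) (V := V) (K := K))).ncard ≤ Nat.card (K →ₐ[F] End F V) := by
  have := finite_algHom (F := F) (V := V) (K := K)
  let := Fintype.ofFinite (K →ₐ[F] End F V)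
  have hK' : Finite Gal(K/F) := DFunLike.finite _
  have hgal : 1 < Nat.card Gal(K/F) := by
    rw [IsGalois.card_aut_eq_finrank]; omega
  have := (Finite.one_lt_card_iff_nontrivial).1 hgal
  obtain ⟨τ, hτ⟩ := exists_ne (1 : Gal(K/F))
  have h1 : (Set.range (cent (F := F) (V := V) (K := K))).ncard =
      (Finset.univ.image (cent (F := F) (V := V) (K := K))).card := by
    rw [← Set.ncard_coe_finset]; simp
  rw [h1, Nat.card_eq_fintype_card, ← Finset.card_univ]
  refine Finset.mul_card_image_le_card _ 2 fun S hS => ?_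
  obtain ⟨φ, -, rfl⟩ := Finset.mem_image.1 hS
  have hne : φ ≠ φ.comp τ.toAlgHom := by
    intro h
    apply hτ
    ext x
    have := AlgHom.congr_fun h x
    exact (φ.toRingHom.injective this).symm
  have hc : cent (φ.comp τ.toAlgHom) = cent φ := by
    unfold cent
    congr 1
    exact τ.surjective.range_comp φ
  rw [← Finset.card_pair hne]
  refine Finset.card_le_card fun ψ hψ => ?_
  simp only [Finset.mem_insert, Finset.mem_singleton] at hψ
  rcases hψ with rfl | rfl <;> simp [hc]

omit [Fintype F] in
lemma card_small_subspaces_le :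
    {W : Submodule F V | W ≠ ⊥ ∧ finrank F W ≤ finrank F V / 2}.ncard ≤
      ∑ k ∈ Finset.Icc 1 (finrank F V / 2), Nat.card {W : Submodule F V // finrank F W = k} := by
  have : Finite (Submodule F V) := inferInstance
  let := Fintype.ofFinite (Submodule F V)
  have h : {W : Submodule F V | W ≠ ⊥ ∧ finrank F W ≤ finrank F V / 2} ⊆
      ((Finset.Icc 1 (finrank F V / 2)).biUnion fun k =>
        Finset.univ.filter fun W : Submodule F V => finrank F W = k : Finset _) := by
    rintro W ⟨hW, hle⟩
    have := Submodule.one_le_finrank_iff.2 hW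
    exact Finset.mem_coe.2 (Finset.mem_biUnion.2
      ⟨finrank F W, Finset.mem_Icc.2 ⟨this, hle⟩, by simp⟩)
  refine (Set.ncard_le_ncard h (Set.toFinite _)).trans ?_
  rw [Set.ncard_coe_finset]
  refine Finset.card_biUnion_le.trans (Finset.sum_le_sum fun k _ => ?_)
  rw [Nat.card_eq_fintype_card, Fintype.card_subtype]

/-- A finite set of proper subrings covering `S` pulls back along an isomorphism `R ≃+* S`. -/
lemma coveringNumber_le_of_equiv {R S : Type} [NonUnitalRing R] [NonUnitalRing S] (e : R ≃+* S)
    (C : Set (NonUnitalSubring S)) (hC : C.Finite) (hp : ∀ T ∈ C, T ≠ ⊤)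
    (hcov : ∀ s : S, ∃ T ∈ C, s ∈ T) : coveringNumber R ≤ (C.ncard : ℕ∞) := by
  let C' := hC.toFinset.image fun T => T.comap (e : R →ₙ+* S)
  have hcard : C'.card ≤ C.ncard := by
    rw [Set.ncard_eq_toFinset_card C hC]
    exact Finset.card_image_le
  refine le_trans (sInf_le ⟨C', ⟨?_, ?_⟩, rfl⟩) (by exact_mod_cast hcard)
  · intro T' hT'
    obtain ⟨T, hT, rfl⟩ := Finset.mem_image.1 hT'
    intro h
    refine hp T (hC.mem_toFinset.1 hT) (eq_top_iff.2 fun s _ => ?_)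
    have hs : e.symm s ∈ T.comap (e : R →ₙ+* S) := h ▸ NonUnitalSubring.mem_top _
    rw [NonUnitalSubring.mem_comap] at hs
    simpa using hs
  · intro r
    obtain ⟨T, hT, hr⟩ := hcov (e r)
    exact ⟨_, Finset.mem_image_of_mem _ (hC.mem_toFinset.2 hT), hr⟩

/-- The cover: stabilizers of nonzero subspaces of at most half the dimension (`s` of them), and
centralizers of the embedded copies of `K` (`c` of them). -/
lemma coveringNumber_le_card [Finite K] [Nontrivial V] (hK : 2 ≤ finrank F K)
    (hdvd : finrank F K ∣ finrank F V) {R : Type} [NonUnitalRing R] (e : R ≃+* End F V) :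
    ∃ s c : ℕ, coveringNumber R ≤ ((s + c : ℕ) : ℕ∞) ∧
      2 * c ≤ Nat.card (K →ₐ[F] End F V) ∧
      s ≤ ∑ k ∈ Finset.Icc 1 (finrank F V / 2),
        Nat.card {W : Submodule F V // finrank F W = k} := by
  have := finite_algHom (F := F) (V := V) (K := K)
  let A := {W : Submodule F V | W ≠ ⊥ ∧ finrank F W ≤ finrank F V / 2}
  refine ⟨A.ncard, _, ?_, two_mul_card_cent_le (K := K) hK, card_small_subspaces_le⟩
  have hA : A.Finite := Set.toFinite _
  have hB : (Set.range (cent (F := F) (V := V) (K := K))).Finite := Set.finite_range _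
  refine (coveringNumber_le_of_equiv e (stab '' A ∪ Set.range (cent (K := K)))
    ((hA.image _).union hB) ?_ ?_).trans ?_
  · rintro _ (⟨W, ⟨hW, hle⟩, rfl⟩ | ⟨φ, rfl⟩)
    · refine stab_ne_top W hW ?_
      rintro rfl
      have : 0 < finrank F V := finrank_pos
      rw [finrank_top] at hle
      omega
    · exact cent_ne_top φ hK
  · intro M
    rcases exists_invariant_or_algHom (K := K) hdvd M with ⟨W, h1, h2, h3⟩ | ⟨φ, hφ⟩
    · exact ⟨_, Or.inl ⟨W, ⟨h1, h2⟩, rfl⟩, h3⟩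
    · exact ⟨_, Or.inr ⟨φ, rfl⟩, hφ⟩
  · have h1 := Set.ncard_union_le (stab '' A) (Set.range (cent (F := F) (V := V) (K := K)))
    have h2 := Set.ncard_image_le (f := stab) hA
    exact_mod_cast h1.trans (Nat.add_le_add_right h2 _)

/-- In dimension two the cover has at most `(q ^ 2 - q) / 2` centralizers and `q + 1` stabilizers,
where `q` is the number of elements of `F`. -/
lemma coveringNumber_two (hV : finrank F V = 2) (hK : finrank F K = 2) {R : Type}
    [NonUnitalRing R] (e : R ≃+* End F V) :
    ∃ N : ℕ, coveringNumber R ≤ (N : ℕ∞) ∧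
      2 * N ≤ Fintype.card F ^ 2 + Fintype.card F + 2 := by
  have := Module.finite_of_finrank_pos (R := F) (M := K) (by omega)
  have : Finite K := Module.finite_of_finite F
  have : Nontrivial V := Module.nontrivial_of_finrank_pos (R := F) (by omega)
  obtain ⟨s, c, h, hc, hs⟩ := coveringNumber_le_card (K := K) hK.ge (by rw [hK, hV]) e
  refine ⟨_, h, ?_⟩
  have hN := card_algHom_mul_le (F := F) (V := V) (K := K) 1 (by omega)
  have hB := card_subspaces_mul_le (F := F) (V := V) 1 (by omega)
  rw [hV] at hN hB hs
  have hq : 2 ≤ Fintype.card F := Fintype.one_lt_card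
  generalize Fintype.card F = q at *
  simp [Finset.prod_range_succ] at hN hB hs
  obtain ⟨r, rfl⟩ : ∃ r, q = r + 2 := ⟨q - 2, by omega⟩
  have e1 : (r + 2) ^ 2 - 1 = (r + 1) * (r + 3) := by
    rw [Nat.sub_eq_iff_eq_add (Nat.one_le_pow _ _ (by omega))]; ring
  have e2 : (r + 2) ^ 2 - (r + 2) = (r + 1) * (r + 2) := by
    rw [Nat.sub_eq_iff_eq_add (Nat.le_self_pow (by omega) _)]; ring
  have e3 : r + 2 - 1 = r + 1 := by omega
  rw [e1, e2, mul_comm] at hN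
  rw [e1, e3, mul_comm] at hB
  have hN' := Nat.le_of_mul_le_mul_left hN (by positivity)
  have hB' := Nat.le_of_mul_le_mul_left hB (by positivity)
  nlinarith

/-- In dimension at least three the centralizers number at most half of the bound, and the
stabilizers fewer than half. -/
lemma coveringNumber_large (hV : 3 ≤ finrank F V) (hK : 2 ≤ finrank F K) (m : ℕ)
    (hm : finrank F K * m = finrank F V) {R : Type} [NonUnitalRing R] (e : R ≃+* End F V) :
    coveringNumber R < ((Fintype.card F ^ (finrank F V * (finrank F V - m)) : ℕ) : ℕ∞) := by
  have := Module.finite_of_finrank_pos (R := F) (M := K) (by omega)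
  have : Finite K := Module.finite_of_finite F
  have : Nontrivial V := Module.nontrivial_of_finrank_pos (R := F) (by omega)
  obtain ⟨s, c, h, hc, hs⟩ := coveringNumber_le_card (K := K) hK ⟨m, hm.symm⟩ e
  refine h.trans_lt ?_
  have hN := card_algHom_mul_le (F := F) (V := V) (K := K) m hm
  have hq : 2 ≤ Fintype.card F := Fintype.one_lt_card
  have hsub := hs.trans (Finset.sum_le_sum fun k hk =>
    card_subspaces_le (F := F) (V := V) k (by have := Finset.mem_Icc.1 hk; omega))
  set q := Fintype.card F
  set n := finrank F V
  set a := finrank F K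
  have hprod := prod_split_le (q ^ n) q a m (by omega)
  rw [hm] at hprod
  have hpos : 0 < ∏ i ∈ Finset.range m, (q ^ n - (q ^ a) ^ i) := by
    refine Finset.prod_pos fun i hi => Nat.sub_pos_of_lt ?_
    rw [← pow_mul, ← hm]
    exact Nat.pow_lt_pow_right (by omega)
      (Nat.mul_lt_mul_of_pos_left (Finset.mem_range.1 hi) (by omega))
  have hcN : 2 * c ≤ q ^ (n * (n - m)) := by
    have h1 := hN.trans hprod
    rw [mul_comm] at h1
    have h2 := hc.trans (Nat.le_of_mul_le_mul_left h1 hpos)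
    rwa [← pow_mul, Nat.sub_mul, one_mul, hm] at h2
  have hj := sum_pow_le q n hq (n / 2) (by omega)
  have hmn : m ≤ n / 2 := by
    rw [Nat.le_div_iff_mul_le (by omega), ← hm, mul_comm]
    exact Nat.mul_le_mul_right _ hK
  have h4 : 4 * q ^ (n / 2 * (n - n / 2 + 1)) ≤ q ^ (n * (n - m)) := by
    calc _ ≤ q ^ 2 * q ^ (n / 2 * (n - n / 2 + 1)) :=
          Nat.mul_le_mul_right _ (by nlinarith)
      _ = q ^ (n / 2 * (n - n / 2 + 1) + 2) := by rw [← pow_add, add_comm]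
      _ ≤ q ^ (n * (n - m)) := Nat.pow_le_pow_right (by omega)
          ((exponent_bound n _ hV rfl).trans (Nat.mul_le_mul_left _ (by omega)))
  have : s + c < q ^ (n * (n - m)) := by omega
  exact_mod_cast this

end MatrixCover

/-- Lemma 3.4: for `n ≥ 2`, `a` the smallest prime divisor of `n`,
`d ≥ n − n/a` and any prime power `q`, `σ(M_n(q)) ≤ q^{nd}`, with equality only when
`n = q = 2` and `d = 1`. -/
theorem coveringNumber_matrix_le
    (n d q : ℕ) (hn : 2 ≤ n) (hd : n - n / n.minFac ≤ d) (hq : IsPrimePow q)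
    (F : Type) [Field F] [Fintype F] (hF : Fintype.card F = q) :
    coveringNumber (Matrix (Fin n) (Fin n) F) ≤ ((q ^ (n * d) : ℕ) : ℕ∞) ∧
    (coveringNumber (Matrix (Fin n) (Fin n) F) = ((q ^ (n * d) : ℕ) : ℕ∞) →
      n = 2 ∧ q = 2 ∧ d = 1) := by
  have hq2 : 2 ≤ q := hF ▸ Fintype.one_lt_card
  have ha : n.minFac.Prime := Nat.minFac_prime (by omega)
  have : NeZero n.minFac := ⟨ha.ne_zero⟩
  obtain ⟨p, hp⟩ := CharP.exists F
  have : Fact p.Prime := ⟨CharP.char_is_prime F p⟩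
  let K := FiniteField.Extension F p n.minFac
  have hK : Module.finrank F K = n.minFac := FiniteField.finrank_extension F p n.minFac
  have hV : Module.finrank F (Fin n → F) = n := by simp
  let e : Matrix (Fin n) (Fin n) F ≃+* Module.End F (Fin n → F) :=
    (Matrix.toLinAlgEquiv' (R := F) (n := Fin n)).toRingEquiv
  rcases hn.eq_or_lt with rfl | hn3
  · obtain ⟨N, hN, hN2⟩ := MatrixCover.coveringNumber_two (K := K) hV (by rw [hK]; norm_num) e
    rw [hF] at hN2
    have hd1 : 1 ≤ d := by norm_num at hd; exact hd
    have hpow : q ^ 2 ≤ q ^ (2 * d) := Nat.pow_le_pow_right (by omega) (by omega)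
    have hNq : N ≤ q ^ 2 := by nlinarith
    refine ⟨hN.trans (by exact_mod_cast hNq.trans hpow), fun h => ?_⟩
    rw [h] at hN
    have hN' : q ^ (2 * d) ≤ N := by exact_mod_cast hN
    refine ⟨rfl, by nlinarith, ?_⟩
    have := (Nat.pow_le_pow_iff_right (by omega : 1 < q)).1 (hN'.trans hNq)
    omega
  · have h := MatrixCover.coveringNumber_large (K := K) (by rw [hV]; omega)
      (by rw [hK]; exact ha.two_le) (n / n.minFac)
      (by rw [hK, hV]; exact Nat.mul_div_cancel' n.minFac_dvd) e
    rw [hV, hF] at h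
    have hpow : q ^ (n * (n - n / n.minFac)) ≤ q ^ (n * d) :=
      Nat.pow_le_pow_right (by omega) (Nat.mul_le_mul_left _ hd)
    have h' := h.trans_le (show _ ≤ ((q ^ (n * d) : ℕ) : ℕ∞) by exact_mod_cast hpow)
    exact ⟨h'.le, fun heq => absurd heq h'.ne⟩
end
end

section
/- Let p be a prime, let q1 and q2 be powers of p, let n ≥ 3, let q = q1 ⊗ q2, and let d = [F_q : F_{q1}] (so q = q1^d). Regard F_{q1} and F_{q2} as subfields of F_q. Suppose h ∈ M_n(F_{q1}), β ∈ F_{q2}, and there exists a nonzero column vector v ∈ F_q^n with h·v = β·v (h acting on F_q^n by extension of scalars). Then either β lies in a proper subfield of F_{q2} that contains F_{q1} ∩ F_{q2}, or there exists a d-dimensional F_{q1}-subspace U of F_{q1}^n with h·U ⊆ U. -/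
/-!
Suppose `β` lies in no proper subfield of `F2` containing `F1 ⊓ F2`. Then `F1 ⊓ F2` and `β`
generate `F2`, so `F1` and `β` generate `F1 ⊔ F2 = F`, that is, `F = F1[β]`.

Fix an `F1`-linear functional `l : F → F1` with `l 1 = 1` and put `Ψ x = (l (x * v i))_i`, an
`F1`-linear map `F → F1 ^ n`. The eigenvector equation gives `h1 (Ψ x) = Ψ (β * x)`, so the range
of `Ψ` is stable under `h1`. The kernel of `Ψ` is closed under multiplication by `β`, hence by
`F1[β] = F`, so it is an ideal of the field `F`; it is not everything, as `l 1 = 1` and `v ≠ 0`.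
Thus `Ψ` is injective and its range has dimension `[F : F1] = d`.
-/

open scoped Classical

noncomputable section

set_option synthInstance.maxHeartbeats 1000000 in
/-- key step of Proposition 4.7: if `h ∈ M_n(F_{q1})` has an eigenvector in
`F_q^n` with eigenvalue `β ∈ F_{q2}`, then either `β` lies in a proper subfield of `F_{q2}`
containing `F_{q1} ∩ F_{q2}`, or `h` stabilizes a `d`-dimensional `F_{q1}`-subspace of
`F_{q1}^n`. -/
theorem AGL_eigenvalue_dichotomy
    (p d1 d2 n d : ℕ) (hp : p.Prime) (hd1 : 1 ≤ d1) (hd2 : 1 ≤ d2) (hn : 3 ≤ n)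
    (F : Type) [Field F] [Fintype F] (F1 F2 : Subfield F)
    (hF1 : Nat.card F1 = p ^ d1) (hF2 : Nat.card F2 = p ^ d2)
    (hF : Nat.card F = p ^ Nat.lcm d1 d2) (hcomp : F1 ⊔ F2 = ⊤)
    (hd : (p ^ d1) ^ d = p ^ Nat.lcm d1 d2)
    (h1 : Matrix (Fin n) (Fin n) ↥F1) (β : ↥F2) (v : Fin n → F) (hv : v ≠ 0)
    (heig : (h1.map (fun a => (a : F))).mulVec v = (β : F) • v) :
    (∃ K : Subfield F, F1 ⊓ F2 ≤ K ∧ K < F2 ∧ (β : F) ∈ K) ∨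
    (∃ U : Submodule ↥F1 (Fin n → ↥F1), Module.finrank ↥F1 U = d ∧
      ∀ u ∈ U, h1.mulVec u ∈ U) := by
  by_cases hK : ∃ K : Subfield F, F1 ⊓ F2 ≤ K ∧ K < F2 ∧ (β : F) ∈ K
  · exact Or.inl hK
  right
  -- The subfield generated by `F1 ⊓ F2` and `β` cannot be proper in `F2`.
  have hgen : F2 ≤ Subfield.closure (((F1 ⊓ F2 : Subfield F) : Set F) ∪ {(β : F)}) := by
    have hle : Subfield.closure (((F1 ⊓ F2 : Subfield F) : Set F) ∪ {(β : F)}) ≤ F2 := by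
      rw [Subfield.closure_le]
      rintro x (hx | rfl)
      · exact hx.2
      · exact β.2
    by_contra hne
    exact hK ⟨_, fun x hx => Subfield.subset_closure (Or.inl hx), lt_of_le_not_ge hle hne,
      Subfield.subset_closure (Or.inr rfl)⟩
  have hfield : IntermediateField.adjoin F1 {(β : F)} = ⊤ := by
    have hF1le : F1 ≤ (IntermediateField.adjoin F1 {(β : F)}).toSubfield := fun x hx =>
      (IntermediateField.adjoin F1 {(β : F)}).algebraMap_mem ⟨x, hx⟩
    have hF2le : F2 ≤ (IntermediateField.adjoin F1 {(β : F)}).toSubfield := by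
      refine hgen.trans ?_
      rw [Subfield.closure_le]
      rintro x (hx | rfl)
      · exact hF1le hx.1
      · exact IntermediateField.mem_adjoin_simple_self F1 (β : F)
    have htop := sup_le hF1le hF2le
    rw [hcomp] at htop
    exact eq_top_iff.2 fun x _ => htop (Subfield.mem_top x)
  have halg : Algebra.adjoin F1 {(β : F)} = ⊤ := by
    rw [← IntermediateField.adjoin_simple_toSubalgebra_of_isAlgebraic
      (Algebra.IsAlgebraic.isAlgebraic (β : F)), hfield, IntermediateField.top_toSubalgebra]
  obtain ⟨l, hl⟩ : ∃ l : F →ₗ[F1] F1, l 1 = 1 :=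
    (Algebra.linearMap F1 F).exists_leftInverse_of_injective
      (LinearMap.ker_eq_bot.2 (algebraMap F1 F).injective) |>.imp fun g hg => by
        simpa using LinearMap.congr_fun hg 1
  let Ψ : F →ₗ[F1] (Fin n → F1) :=
    LinearMap.pi fun i => l ∘ₗ LinearMap.mulRight F1 (v i)
  have hΨ : ∀ x i, Ψ x i = l (x * v i) := fun _ _ => rfl
  have hequiv : ∀ x, h1.mulVec (Ψ x) = Ψ ((β : F) * x) := by
    intro x
    ext1 i
    have hi : ∑ j, (h1 i j : F) * v j = β * v i := congrFun heig i
    have hexp : (β : F) * x * v i = ∑ j, h1 i j • (x * v j) := by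
      rw [mul_right_comm, ← hi, Finset.sum_mul]
      refine Finset.sum_congr rfl fun j _ => ?_
      rw [Subfield.smul_def, smul_eq_mul]
      ring
    rw [hΨ, hexp, map_sum]
    simp only [Matrix.mulVec, dotProduct, hΨ, map_smul, smul_eq_mul]
  have hstab : ∀ y x, Ψ x = 0 → Ψ (y * x) = 0 := by
    intro y
    have hy : y ∈ Algebra.adjoin F1 {(β : F)} := halg ▸ Algebra.mem_top
    induction hy using Algebra.adjoin_induction with
    | mem y hy =>
      intro x hx
      rw [Set.mem_singleton_iff.1 hy, ← hequiv, hx, Matrix.mulVec_zero]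
    | algebraMap r =>
      intro x hx
      rw [← Algebra.smul_def, map_smul, hx, smul_zero]
    | add a b _ _ ha hb =>
      intro x hx
      rw [add_mul, map_add, ha x hx, hb x hx, add_zero]
    | mul a b _ _ ha hb =>
      intro x hx
      rw [mul_assoc]
      exact ha _ (hb x hx)
  have hinj : Function.Injective Ψ := by
    rw [injective_iff_map_eq_zero]
    intro x hx
    by_contra hx0
    obtain ⟨i, hi⟩ := Function.ne_iff.1 hv
    -- Scale `x` to `(v i)⁻¹`, where the `i`-th coordinate of `Ψ` is `l 1 = 1`.
    have hz := congrFun (hstab ((v i)⁻¹ * x⁻¹) x hx) i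
    rw [hΨ, mul_assoc (v i)⁻¹, inv_mul_cancel₀ hx0, mul_one, inv_mul_cancel₀ hi, hl] at hz
    exact one_ne_zero hz
  refine ⟨LinearMap.range Ψ, ?_, ?_⟩
  · rw [LinearMap.finrank_range_of_inj hinj]
    have hcard := Module.natCard_eq_pow_finrank (K := F1) (V := F)
    rw [hF, hF1, ← hd] at hcard
    exact (Nat.pow_right_injective (Nat.one_lt_pow (by omega) hp.one_lt) hcard).symm
  · rintro _ ⟨x, rfl⟩
    exact ⟨_, (hequiv x).symm⟩
end
end

section
/- Let q be a prime power, let n ≥ 1 and 1 ≤ k < n/2, and let V = F_q^n. Suppose V = U ⊕ U′ with dim U = k and dim U′ = n − k, and suppose t is a linear endomorphism of V with t(U) ⊆ U and t(U′) ⊆ U′ such that the restriction t|_U is an invertible transformation of U of multiplicative order q^k − 1 and t|_{U′} is an invertible transformation of U′ of multiplicative order q^{n−k} − 1. Then every t-invariant subspace W of V with 0 < dim W < n satisfies W = U or W = U′. -/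
/-!
The key point is that an endomorphism `s` of order `q ^ m - 1` on an `m`-dimensional space over the
field with `q` elements acts irreducibly. The algebra `F[s]` has at most `q ^ m` elements
by Cayley–Hamilton, and it contains `0` and the `q ^ m - 1` distinct powers of `s`; so these
are all its elements, and each nonzero element of `F[s]` is a unit. Hence `i ↦ s ^ i w` is
injective on `0 ≤ i < q ^ m - 1` for every `w ≠ 0`, and an invariant subspace containing `w`
has at least `q ^ m` elements.

Given this, an invariant subspace `W` meets each of `U`, `U'` trivially or contains it. If `W`
contains one of them, the modular law identifies `W`. Otherwise `W` projects isomorphically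
onto both `U` and `U'`, which have different dimensions.
-/

open scoped Classical

noncomputable section

/-- An invertible endomorphism of order `q ^ m - 1` on a nonzero `m`-dimensional space over the
field with `q` elements is irreducible. -/
theorem eq_bot_or_eq_top_of_orderOf {F E : Type*} [Field F] [Fintype F] [AddCommGroup E]
    [Module F E] [FiniteDimensional F E] (hm : 1 ≤ Module.finrank F E)
    (s : Module.End F E) (hs : IsUnit s)
    (hord : orderOf s = Fintype.card F ^ Module.finrank F E - 1)
    (W : Submodule F E) (hW : ∀ x ∈ W, s x ∈ W) : W = ⊥ ∨ W = ⊤ := by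
  have : Finite E := Module.finite_of_finite F
  have : Fintype E := Fintype.ofFinite E
  have : Finite (Module.End F E) := Module.finite_of_finite F
  have : Nontrivial E := Module.nontrivial_of_finrank_pos (R := F) hm
  have hN : 1 ≤ Fintype.card F ^ Module.finrank F E := Nat.one_le_pow _ _ Fintype.card_pos
  set N := orderOf s with hNdef
  have hN' : N + 1 = Fintype.card F ^ Module.finrank F E := by omega
  -- `S` consists of `0` and the powers of `s`; it turns out to be all of `F[s]`.
  set S : Finset (Module.End F E) := insert 0 ((Finset.range N).image (s ^ ·)) with hS
  have hScard : S.card = N + 1 := by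
    rw [hS, Finset.card_insert_of_notMem, Finset.card_image_of_injOn, Finset.card_range]
    · intro i hi j hj h
      exact pow_injOn_Iio_orderOf (by simpa using hi) (by simpa using hj) h
    · intro h
      obtain ⟨i, -, hi⟩ := Finset.mem_image.1 h
      exact (hs.pow i).ne_zero hi
  set A := Algebra.adjoin F {s} with hA
  have hsA : s ∈ A := Algebra.subset_adjoin rfl
  have hSA : (S : Set (Module.End F E)) ⊆ A := by
    intro a ha
    rw [Finset.mem_coe, hS] at ha
    rcases Finset.mem_insert.1 ha with rfl | ha
    · exact A.zero_mem
    · obtain ⟨i, -, rfl⟩ := Finset.mem_image.1 ha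
      exact pow_mem hsA i
  have hfin : Module.finrank F A ≤ Module.finrank F E := by
    have hle : Subalgebra.toSubmodule A ≤ (Polynomial.degreeLT F (Module.finrank F E)).map
        (Polynomial.aeval s).toLinearMap := by
      intro a ha
      rw [Subalgebra.mem_toSubmodule, hA, Algebra.adjoin_singleton_eq_range_aeval] at ha
      obtain ⟨f, rfl⟩ := ha
      refine ⟨f %ₘ s.charpoly, ?_, ?_⟩
      · rw [SetLike.mem_coe, Polynomial.mem_degreeLT, ← LinearMap.charpoly_natDegree s,
          ← Polynomial.degree_eq_natDegree s.charpoly_monic.ne_zero]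
        exact Polynomial.degree_modByMonic_lt f s.charpoly_monic
      · conv_rhs => rw [← Polynomial.modByMonic_add_div f s.charpoly]
        simp [LinearMap.aeval_self_charpoly]
    have := LinearEquiv.finiteDimensional
      (Polynomial.degreeLTEquiv F (Module.finrank F E)).symm
    calc Module.finrank F A ≤ _ := Submodule.finrank_mono hle
      _ ≤ Module.finrank F (Polynomial.degreeLT F (Module.finrank F E)) :=
        Submodule.finrank_map_le _ _
      _ = Module.finrank F E := by
        rw [(Polynomial.degreeLTEquiv F (Module.finrank F E)).finrank_eq, Module.finrank_fin_fun]
  have hAcard : (A : Set (Module.End F E)).ncard ≤ N + 1 := by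
    rw [← Nat.card_coe_set_eq, hN']
    change Nat.card A ≤ _
    rw [Module.natCard_eq_pow_finrank (K := F), Nat.card_eq_fintype_card]
    exact Nat.pow_le_pow_right Fintype.card_pos hfin
  have hSeq : (S : Set (Module.End F E)) = A :=
    Set.eq_of_subset_of_ncard_le hSA (by rw [Set.ncard_coe_finset, hScard]; exact hAcard)
  have hunit : ∀ a ∈ A, a ≠ 0 → IsUnit a := by
    intro a ha h0
    have : a ∈ S := by rw [← Finset.mem_coe, hSeq]; exact ha
    rcases Finset.mem_insert.1 this with rfl | h
    · exact absurd rfl h0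
    · obtain ⟨i, -, rfl⟩ := Finset.mem_image.1 h
      exact hs.pow i
  have hpowW : ∀ i : ℕ, ∀ x ∈ W, (s ^ i) x ∈ W := by
    intro i
    induction i with
    | zero => intro x hx; simpa using hx
    | succ i ih => intro x hx; rw [pow_succ']; exact hW _ (ih x hx)
  rw [or_iff_not_imp_left]
  intro hbot
  obtain ⟨w, hw, hw0⟩ := W.exists_mem_ne_zero_of_ne_bot hbot
  have hinj : ∀ a ∈ A, a w = 0 → a = 0 := by
    intro a ha h
    by_contra h0
    have hbij := (Module.End.isUnit_iff a).1 (hunit a ha h0)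
    exact hw0 (hbij.1 (by rw [h, map_zero]))
  set T : Finset E := S.image (fun a => a w) with hT
  have hTcard : T.card = Fintype.card E := by
    rw [hT, Finset.card_image_of_injOn, hScard, hN', Module.card_eq_pow_finrank (K := F) (V := E)]
    intro a ha b hb h
    refine sub_eq_zero.1 (hinj _ (A.sub_mem (hSA ha) (hSA hb)) ?_)
    rw [LinearMap.sub_apply]
    exact sub_eq_zero.2 h
  rw [eq_top_iff]
  intro x _
  have hx : x ∈ T := by rw [(Finset.card_eq_iff_eq_univ T).1 hTcard]; exact Finset.mem_univ x
  obtain ⟨a, ha, rfl⟩ := Finset.mem_image.1 hx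
  rcases Finset.mem_insert.1 ha with rfl | ha
  · exact W.zero_mem
  · obtain ⟨i, -, rfl⟩ := Finset.mem_image.1 ha
    exact hpowW i w hw

/-- The irreducibility of `t` on an invariant subspace `U`, stated for subspaces of the ambient
space contained in `U`. -/
theorem eq_bot_or_eq_of_le {F E : Type*} [Field F] [Fintype F] [AddCommGroup E]
    [Module F E] [FiniteDimensional F E] (U : Submodule F E) (hm : 1 ≤ Module.finrank F U)
    (t : E →ₗ[F] E) (hU : ∀ x ∈ U, t x ∈ U) (hunit : IsUnit (t.restrict hU))
    (hord : orderOf (t.restrict hU) = Fintype.card F ^ Module.finrank F U - 1)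
    (W : Submodule F E) (hWU : W ≤ U) (hW : ∀ x ∈ W, t x ∈ W) : W = ⊥ ∨ W = U := by
  rcases eq_bot_or_eq_top_of_orderOf hm (t.restrict hU) hunit hord (W.comap U.subtype)
    (fun x hx => hW _ hx) with h | h
  · left
    exact (Submodule.disjoint_iff_comap_eq_bot.2 h).eq_bot_of_ge hWU
  · right
    exact le_antisymm hWU (Submodule.comap_subtype_eq_top.1 h)

/-- If `U` is irreducible with an invariant complement `U'`, then a nonzero invariant `W` meeting
`U'` trivially has the dimension of `U`: the projection along `U'` maps it isomorphically onto
`U`. -/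
theorem finrank_eq_of_disjoint {F E : Type*} [Field F] [AddCommGroup E]
    [Module F E] [FiniteDimensional F E] {U U' : Submodule F E} (hc : IsCompl U U')
    (t : E →ₗ[F] E) (hU : ∀ x ∈ U, t x ∈ U) (hU' : ∀ x ∈ U', t x ∈ U')
    (hirr : ∀ W : Submodule F E, W ≤ U → (∀ x ∈ W, t x ∈ W) → W = ⊥ ∨ W = U)
    (W : Submodule F E) (hW : ∀ x ∈ W, t x ∈ W) (hpos : 0 < Module.finrank F W)
    (hd : W ⊓ U' = ⊥) : Module.finrank F W = Module.finrank F U := by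
  set p : E →ₗ[F] E := U.subtype ∘ₗ U.projectionOnto U' hc with hp
  have hker : LinearMap.ker p = U' := by
    rw [hp, LinearMap.ker_comp_of_ker_eq_bot _ U.ker_subtype, Submodule.ker_projectionOnto]
  have hpU : ∀ x ∈ U, p x = x := fun x hx => by
    simpa [hp] using congrArg Subtype.val (Submodule.projectionOnto_apply_left hc ⟨x, hx⟩)
  have hpmem : ∀ x, p x ∈ U := fun x => (U.projectionOnto U' hc x).2
  have hcomm : ∀ x, t (p x) = p (t x) := by
    intro x
    have h1 : x - p x ∈ U' := by
      rw [← hker, LinearMap.mem_ker, map_sub, hpU _ (hpmem x), sub_self]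
    have h2 : p (t (x - p x)) = 0 := by
      rw [← LinearMap.mem_ker, hker]; exact hU' _ h1
    rw [map_sub, map_sub, hpU _ (hU _ (hpmem x)), sub_eq_zero] at h2
    exact h2.symm
  have hfr : Module.finrank F (W.map p) = Module.finrank F W := by
    have hinj : Function.Injective (p.domRestrict W) := by
      rw [← LinearMap.ker_eq_bot, eq_bot_iff]
      intro x hx
      have hx' : (x : E) ∈ W ⊓ U' := ⟨x.2, by rw [← hker]; exact hx⟩
      rw [hd] at hx'
      exact Subtype.ext hx'
    have := LinearMap.finrank_range_of_inj hinj
    rwa [LinearMap.range_domRestrict] at this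
  rcases hirr (W.map p) (by rintro _ ⟨x, -, rfl⟩; exact hpmem x)
    (by rintro _ ⟨x, hx, rfl⟩; exact ⟨t x, hW x hx, (hcomm x).symm⟩) with h | h
  · rw [h, finrank_bot] at hfr; omega
  · rw [← hfr, h]

/-- A proper subspace `W` that contains `U`, and either contains its complement `U'` or meets it
trivially, is equal to `U`. -/
theorem eq_of_le_of_ne_top {F E : Type*} [Field F] [AddCommGroup E]
    [Module F E] {U U' : Submodule F E} (hc : IsCompl U U') (W : Submodule F E) (hUW : U ≤ W)
    (hne : W ≠ ⊤) (hd : W ⊓ U' = ⊥ ∨ W ⊓ U' = U') : W = U := by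
  rcases hd with h | h
  · exact (eq_of_le_of_inf_le_of_sup_le hUW (by rw [h]; exact bot_le)
      (by rw [hc.sup_eq_top]; exact le_top)).symm
  · exact absurd (eq_top_iff.2 (hc.sup_eq_top ▸ sup_le hUW (inf_eq_right.1 h))) hne

set_option synthInstance.maxHeartbeats 1000000 in
/-- part of Lemma 5.1: if `t` is of type `T_k` for the decomposition
`F_q^n = U ⊕ U′` (restrictions of Singer-cycle orders `q^k − 1` and `q^{n−k} − 1`), then the
only nontrivial proper `t`-invariant subspaces are `U` and `U′`. -/
theorem typeTk_invariant_subspaces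
    (q n k : ℕ) (hq : IsPrimePow q) (hn : 1 ≤ n) (hk1 : 1 ≤ k) (hk2 : 2 * k < n)
    (F : Type) [Field F] [Fintype F] (hF : Fintype.card F = q)
    (U U' : Submodule F (Fin n → F)) (hcompl : IsCompl U U')
    (hdimU : Module.finrank F U = k) (hdimU' : Module.finrank F U' = n - k)
    (t : (Fin n → F) →ₗ[F] (Fin n → F))
    (hU : ∀ x ∈ U, t x ∈ U) (hU' : ∀ x ∈ U', t x ∈ U')
    (hunitU : IsUnit (t.restrict hU)) (hordU : orderOf (t.restrict hU) = q ^ k - 1)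
    (hunitU' : IsUnit (t.restrict hU'))
    (hordU' : orderOf (t.restrict hU') = q ^ (n - k) - 1) :
    ∀ W : Submodule F (Fin n → F), (∀ x ∈ W, t x ∈ W) →
      0 < Module.finrank F W → Module.finrank F W < n → W = U ∨ W = U' := by
  intro W hW hpos hlt
  subst hF
  have h1 := eq_bot_or_eq_of_le U (by omega) t hU hunitU (by rw [hordU, hdimU])
  have h2 := eq_bot_or_eq_of_le U' (by omega) t hU' hunitU' (by rw [hordU', hdimU'])
  have hne : W ≠ ⊤ := by
    rintro rfl
    simp at hlt
  have hWU := h1 (W ⊓ U) inf_le_right (fun x hx => ⟨hW x hx.1, hU x hx.2⟩)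
  have hWU' := h2 (W ⊓ U') inf_le_right (fun x hx => ⟨hW x hx.1, hU' x hx.2⟩)
  rcases hWU with hb | ht
  · rcases hWU' with hb' | ht'
    · have e1 := finrank_eq_of_disjoint hcompl t hU hU' h1 W hW hpos hb'
      have e2 := finrank_eq_of_disjoint hcompl.symm t hU' hU h2 W hW hpos hb
      omega
    · exact Or.inr (eq_of_le_of_ne_top hcompl.symm W (inf_eq_right.1 ht') hne (Or.inl hb))
  · exact Or.inl (eq_of_le_of_ne_top hcompl W (inf_eq_right.1 ht) hne hWU')
end
end

section
/- Let q be a prime power, let n ≥ 1 and 1 ≤ k < n/2, and let t ∈ M_n(q) be an element of type T_k stabilizing a k-dimensional subspace U of F_q^n (i.e., F_q^n = U ⊕ U′ is a t-invariant decomposition with t|_U invertible of order q^k − 1 and t|_{U′} invertible of order q^{n−k} − 1). Let ℓ be a prime dividing n. Then there exists a subring K of M_n(q) which is a field with q^ℓ elements and contains the scalar matrices, such that t commutes with every element of K, if and only if ℓ divides k. -/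
/-!
If an operator `f` on an `m`-dimensional space over `F = F_q` has order `q ^ m - 1`, then its powers
together with `0` are `q ^ m` distinct elements of `F[f]`, which has at most `q ^ m` elements by
Cayley–Hamilton. Hence `F[f]` is a field with `q ^ m` elements (`singer_adjoin_eq`,
`singer_exists_inv`).

Suppose a field `K` of `q ^ ℓ` matrices commutes with `t`. On `U'` the operator `t ^ (q ^ k - 1) - 1`
is nonzero, because `k < n - k`, so it is invertible in the field `F[t|_U']`; on `U` it vanishes.
Thus `U` is the fixed space of `t ^ (q ^ k - 1)` (`mem_iff_pow_fixed`) and is stable under `K`.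
Being a `K`-vector space, `U` has `q ^ k = (q ^ ℓ) ^ d` elements for some `d`, so `ℓ ∣ k`
(`dvd_finrank_of_stable`).

Conversely, if `ℓ` divides `k` then it also divides `n - k`, so the extension `E` of `F` of degree `ℓ`
embeds in both `F[t|_U]` and `F[t|_U']` (`singer_exists_algHom`). The diagonal action of `E` on
`U ⊕ U'` commutes with `t`, and its image is the required `K`.
-/

open scoped Classical

noncomputable section

/-- The elements `0, 1, f, f², …` already exhaust `F[f]`: they are `q ^ m` distinct elements, while
`F[f]` has at most `q ^ m` elements by Cayley–Hamilton. In particular `F[f]` has exactly `q ^ m`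
elements; `f` is a unit because its order is positive. -/
lemma singer_adjoin_eq {F V : Type*} [Field F] [Fintype F] [AddCommGroup V] [Module F V]
    [FiniteDimensional F V] {m : ℕ} (hm : 1 ≤ m) (hV : Module.finrank F V = m)
    (f : Module.End F V) (hf : orderOf f = Fintype.card F ^ m - 1) :
    (Algebra.adjoin F {f} : Set (Module.End F V)) =
        insert 0 ((fun i => f ^ i) '' Set.Iio (orderOf f)) ∧
      IsUnit f ∧ (Algebra.adjoin F {f} : Set (Module.End F V)).ncard = Fintype.card F ^ m := by
  have hone : 1 < Fintype.card F ^ m := Nat.one_lt_pow (by omega) Fintype.one_lt_card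
  have : Nontrivial V := Module.nontrivial_of_finrank_pos (R := F) (by omega)
  have : Finite (Module.End F V) := Module.finite_of_finite F
  have hpos : 0 < orderOf f := by omega
  have hu : IsUnit f := (orderOf_pos_iff.mp hpos).isUnit
  have hcard : (insert 0 ((fun i => f ^ i) '' Set.Iio (orderOf f))).ncard
      = Fintype.card F ^ m := by
    rw [Set.ncard_insert_of_notMem, pow_injOn_Iio_orderOf.ncard_image]
    · simp; omega
    · rintro ⟨i, -, hi⟩
      exact (hu.pow i).ne_zero hi
  have hle : (Algebra.adjoin F {f} : Set (Module.End F V)).ncard ≤ Fintype.card F ^ m := by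
    have hdeg : Nat.card (Polynomial.degreeLT F m) = Fintype.card F ^ m := by
      rw [Nat.card_congr (Polynomial.degreeLTEquiv F m).toEquiv]
      simp
    have : Finite (Polynomial.degreeLT F m) := Nat.finite_of_card_ne_zero (by omega)
    have hsub : (Algebra.adjoin F {f} : Set (Module.End F V)) ⊆
        Set.range (fun p : Polynomial.degreeLT F m => Polynomial.aeval f (p : Polynomial F)) := by
      intro g hg
      rw [SetLike.mem_coe, Algebra.adjoin_singleton_eq_range_aeval] at hg
      obtain ⟨p, rfl⟩ := hg
      refine ⟨⟨p %ₘ f.charpoly, ?_⟩, ?_⟩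
      · rw [Polynomial.mem_degreeLT]
        refine (Polynomial.degree_modByMonic_lt _ f.charpoly_monic).trans_eq ?_
        rw [Polynomial.degree_eq_natDegree f.charpoly_monic.ne_zero, LinearMap.charpoly_natDegree,
          hV]
      · exact Polynomial.aeval_modByMonic_eq_self_of_root f.aeval_self_charpoly
    calc _ ≤ _ := Set.ncard_le_ncard hsub (Set.toFinite _)
      _ ≤ Nat.card (Polynomial.degreeLT F m) := by
        rw [← Nat.card_coe_set_eq]
        exact Finite.card_range_le _
      _ = _ := hdeg
  have hsup : insert 0 ((fun i => f ^ i) '' Set.Iio (orderOf f)) ⊆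
      (Algebra.adjoin F {f} : Set (Module.End F V)) := by
    rintro g (rfl | ⟨i, -, rfl⟩)
    · exact zero_mem _
    · exact pow_mem (Algebra.self_mem_adjoin_singleton F f) i
  have heq := Set.eq_of_subset_of_ncard_le hsup (by omega) (Set.toFinite _)
  exact ⟨heq.symm, hu, heq ▸ hcard⟩

/-- A nonzero element of `F[f]` is invertible in `F[f]`, since it is a power of `f`. -/
lemma singer_exists_inv {F V : Type*} [Field F] [Fintype F] [AddCommGroup V] [Module F V]
    [FiniteDimensional F V] {m : ℕ} (hm : 1 ≤ m) (hV : Module.finrank F V = m)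
    (f : Module.End F V) (hf : orderOf f = Fintype.card F ^ m - 1)
    {g : Module.End F V} (hg : g ∈ Algebra.adjoin F {f}) (hg0 : g ≠ 0) :
    ∃ h ∈ Algebra.adjoin F {f}, h * g = 1 ∧ g * h = 1 := by
  obtain ⟨heq, -, -⟩ := singer_adjoin_eq hm hV f hf
  have hg' : g ∈ (Algebra.adjoin F {f} : Set (Module.End F V)) := hg
  rw [heq] at hg'
  obtain rfl | ⟨i, hi, rfl⟩ := hg'
  · exact absurd rfl hg0
  · have hi : i < orderOf f := hi
    refine ⟨f ^ (orderOf f - i), pow_mem (Algebra.self_mem_adjoin_singleton F f) _, ?_, ?_⟩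
    · rw [← pow_add, Nat.sub_add_cancel hi.le, pow_orderOf_eq_one]
    · rw [← pow_add, Nat.add_sub_cancel' hi.le, pow_orderOf_eq_one]

/-- `F[f]` is a field of degree `m` over `F`, so it contains a copy of every extension of `F` of
degree dividing `m`; this copy commutes with `f`. -/
lemma singer_exists_algHom {F V E : Type*} [Field F] [Fintype F] [AddCommGroup V] [Module F V]
    [FiniteDimensional F V] [Field E] [Algebra F E] {m : ℕ} (hm : 1 ≤ m)
    (hV : Module.finrank F V = m)
    (f : Module.End F V) (hf : orderOf f = Fintype.card F ^ m - 1)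
    (hE : Module.finrank F E ∣ m) :
    ∃ φ : E →ₐ[F] Module.End F V, ∀ x, Commute f (φ x) := by
  have : Nontrivial V := Module.nontrivial_of_finrank_pos (R := F) (by omega)
  have : Finite (Module.End F V) := Module.finite_of_finite F
  have hcomm : ∀ x ∈ Algebra.adjoin F {f}, ∀ y ∈ Algebra.adjoin F {f}, x * y = y * x := by
    intro x hx y hy
    rw [Algebra.adjoin_singleton_eq_range_aeval] at hx hy
    obtain ⟨p, rfl⟩ := hx
    obtain ⟨r, rfl⟩ := hy
    simp only [← map_mul, mul_comm p r]
  have hfield : IsField (Algebra.adjoin F {f}) :=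
    { exists_pair_ne := exists_pair_ne _
      mul_comm := fun x y => Subtype.ext (hcomm x x.2 y y.2)
      mul_inv_cancel := fun {x} hx => by
        obtain ⟨h, hh, -, h1⟩ := singer_exists_inv hm hV f hf x.2
          (fun h0 => hx (Subtype.ext h0))
        exact ⟨⟨h, hh⟩, Subtype.ext h1⟩ }
  have hfin : Module.finrank F (Algebra.adjoin F {f}) = m := by
    refine Nat.pow_right_injective (Fintype.one_lt_card (α := F)) ?_
    change Fintype.card F ^ _ = Fintype.card F ^ m
    rw [← (singer_adjoin_eq hm hV f hf).2.2, ← Nat.card_eq_fintype_card,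
      ← Module.natCard_eq_pow_finrank]
    rfl
  let := hfield.toField
  obtain ⟨ψ⟩ := FiniteField.nonempty_algHom_of_finrank_dvd (F := F) (K := E)
    (L := Algebra.adjoin F {f}) (hfin.symm ▸ hE)
  exact ⟨(Algebra.adjoin F {f}).val.comp ψ, fun x =>
    hcomm _ (Algebra.self_mem_adjoin_singleton F f) _ (ψ x).2⟩

/-- `U` is the fixed space of `T ^ (q ^ k - 1)`: on `U'` the operator `T ^ (q ^ k - 1) - 1` is a
nonzero element of the field `F[T|_U']`. -/
lemma mem_iff_pow_fixed {F V : Type*} [Field F] [Fintype F] [AddCommGroup V] [Module F V]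
    [FiniteDimensional F V] {k m : ℕ} (hk : 1 ≤ k) (hkm : k < m) (T : Module.End F V)
    {U U' : Submodule F V} (hcompl : IsCompl U U') (hdimU' : Module.finrank F U' = m)
    (hU : ∀ x ∈ U, T x ∈ U) (hU' : ∀ x ∈ U', T x ∈ U')
    (hordU : orderOf (T.restrict hU) = Fintype.card F ^ k - 1)
    (hordU' : orderOf (T.restrict hU') = Fintype.card F ^ m - 1) (x : V) :
    x ∈ U ↔ (T ^ (Fintype.card F ^ k - 1)) x = x := by
  set N := Fintype.card F ^ k - 1 with hN
  have hone : 1 < Fintype.card F ^ k := Nat.one_lt_pow (by omega) Fintype.one_lt_card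
  have hlt : Fintype.card F ^ k < Fintype.card F ^ m :=
    Nat.pow_lt_pow_right Fintype.one_lt_card hkm
  have hfix : ∀ y ∈ U, (T ^ N) y = y := by
    intro y hy
    have h1 : (T.restrict hU) ^ N = 1 := hordU ▸ pow_orderOf_eq_one _
    rw [Module.End.pow_restrict] at h1
    exact congrArg Subtype.val (LinearMap.congr_fun h1 ⟨y, hy⟩)
  refine ⟨hfix x, fun hx => ?_⟩
  obtain ⟨a, ha, b, hb, rfl⟩ : ∃ a ∈ U, ∃ b ∈ U', a + b = x :=
    Submodule.mem_sup.mp (hcompl.sup_eq_top ▸ Submodule.mem_top)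
  rw [map_add, hfix a ha, add_right_inj] at hx
  obtain ⟨h, -, h1, -⟩ := singer_exists_inv (by omega) hdimU' (T.restrict hU') hordU'
    (g := (T.restrict hU') ^ N - 1)
    (sub_mem (pow_mem (Algebra.self_mem_adjoin_singleton F _) _) (one_mem _)) (by
      intro h0
      have := Nat.le_of_dvd (by omega) (orderOf_dvd_of_pow_eq_one (sub_eq_zero.mp h0))
      omega)
  have hb0 : ((T.restrict hU') ^ N - 1) ⟨b, hb⟩ = 0 := by
    rw [Module.End.pow_restrict]
    exact Subtype.ext (by simp [hx])
  have : (⟨b, hb⟩ : U') = 0 := by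
    rw [← Module.End.one_apply (R := F) (⟨b, hb⟩ : U'), ← h1, Module.End.mul_apply, hb0, map_zero]
  have hb' : b = 0 := congrArg Subtype.val this
  simpa [hb'] using ha

/-- A subspace stable under a field `K` of `q ^ ℓ` matrices is a `K`-vector space, so its
`F`-dimension is a multiple of `ℓ`, by counting. -/
lemma dvd_finrank_of_stable {F : Type} [Field F] [Fintype F] {n ℓ : ℕ}
    (K : Subring (Matrix (Fin n) (Fin n) F)) (hK : IsField K)
    (hcard : Nat.card K = Fintype.card F ^ ℓ) (U : Submodule F (Fin n → F))
    (hU : ∀ u ∈ K, ∀ x ∈ U, u.mulVec x ∈ U) : ℓ ∣ Module.finrank F U := by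
  let := hK.toField
  let : Module K U :=
    { smul := fun u x => ⟨u.1.mulVec x.1, hU u.1 u.2 x.1 x.2⟩
      one_smul := fun x => Subtype.ext (Matrix.one_mulVec x.1)
      mul_smul := fun u v x => Subtype.ext (Matrix.mulVec_mulVec x.1 u.1 v.1).symm
      smul_zero := fun u => Subtype.ext (Matrix.mulVec_zero u.1)
      smul_add := fun u x y => Subtype.ext (Matrix.mulVec_add u.1 x.1 y.1)
      add_smul := fun u v x => Subtype.ext (Matrix.add_mulVec u.1 v.1 x.1)
      zero_smul := fun x => Subtype.ext (Matrix.zero_mulVec x.1) }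
  have : Module.Finite K U := Module.Finite.of_finite
  have h1 := Module.natCard_eq_pow_finrank (K := K) (V := U)
  rw [Module.natCard_eq_pow_finrank (K := F) (V := U), hcard, ← pow_mul,
    Nat.card_eq_fintype_card] at h1
  exact ⟨_, Nat.pow_right_injective (Fintype.one_lt_card (α := F)) h1⟩

set_option synthInstance.maxHeartbeats 1000000 in
/-- part of Lemma 5.1: a matrix `t` of type `T_k` centralizes a subfield
`K ≅ F_{q^ℓ}` of `M_n(q)` containing the scalars if and only if `ℓ ∣ k`. -/
theorem typeTk_centralizes_field_iff
    (q n k ℓ : ℕ) (hq : IsPrimePow q) (hn : 1 ≤ n) (hk1 : 1 ≤ k) (hk2 : 2 * k < n)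
    (hℓ : ℓ.Prime) (hℓn : ℓ ∣ n)
    (F : Type) [Field F] [Fintype F] (hF : Fintype.card F = q)
    (t : Matrix (Fin n) (Fin n) F)
    (U U' : Submodule F (Fin n → F)) (hcompl : IsCompl U U')
    (hdimU : Module.finrank F U = k) (hdimU' : Module.finrank F U' = n - k)
    (hU : ∀ x ∈ U, t.mulVecLin x ∈ U) (hU' : ∀ x ∈ U', t.mulVecLin x ∈ U')
    (hunitU : IsUnit (t.mulVecLin.restrict hU))
    (hordU : orderOf (t.mulVecLin.restrict hU) = q ^ k - 1)
    (hunitU' : IsUnit (t.mulVecLin.restrict hU'))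
    (hordU' : orderOf (t.mulVecLin.restrict hU') = q ^ (n - k) - 1) :
    (∃ K : Subring (Matrix (Fin n) (Fin n) F), IsField ↥K ∧ Nat.card ↥K = q ^ ℓ ∧
        (∀ a : F, algebraMap F (Matrix (Fin n) (Fin n) F) a ∈ K) ∧
        (∀ u ∈ K, t * u = u * t)) ↔
      ℓ ∣ k := by
  subst hF
  constructor
  · rintro ⟨K, hK, hcard, -, hcomm⟩
    rw [← hdimU]
    refine dvd_finrank_of_stable K hK hcard U fun u hu x hx => ?_
    have hmem := mem_iff_pow_fixed hk1 (by omega : k < n - k) t.mulVecLin hcompl hdimU' hU hU'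
      hordU hordU'
    have hc : Commute (t.mulVecLin ^ (Fintype.card F ^ k - 1)) u.mulVecLin := by
      refine Commute.pow_left ?_ _
      change t.mulVecLin ∘ₗ u.mulVecLin = u.mulVecLin ∘ₗ t.mulVecLin
      rw [← Matrix.mulVecLin_mul, ← Matrix.mulVecLin_mul, hcomm u hu]
    have := LinearMap.congr_fun hc.eq x
    rw [Module.End.mul_apply, Module.End.mul_apply, (hmem x).mp hx] at this
    exact (hmem _).mpr this
  · intro hℓk
    obtain ⟨p, _⟩ := CharP.exists F
    have : Fact p.Prime := ⟨CharP.char_is_prime F p⟩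
    have : NeZero ℓ := ⟨hℓ.ne_zero⟩
    have : Nonempty (Fin n) := ⟨⟨0, by omega⟩⟩
    let E := FiniteField.Extension F p ℓ
    have hE : Module.finrank F E = ℓ := FiniteField.finrank_extension F p ℓ
    obtain ⟨φ, hφ⟩ := singer_exists_algHom (E := E) hk1 hdimU _ hordU (hE.symm ▸ hℓk)
    obtain ⟨φ', hφ'⟩ := singer_exists_algHom (E := E) (by omega) hdimU' _ hordU'
      (hE.symm ▸ Nat.dvd_sub hℓn hℓk)
    let e := Submodule.prodEquivOfIsCompl U U' hcompl
    -- The diagonal action of `E` on `U ⊕ U'`, carried over to `F ^ n`.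
    let Φ : E →ₐ[F] Module.End F (Fin n → F) :=
      (e.conjAlgEquiv F).toAlgHom.comp ((LinearMap.prodMapAlgHom F U U').comp (φ.prod φ'))
    let Ψ : E →ₐ[F] Matrix (Fin n) (Fin n) F := LinearMap.toMatrixAlgEquiv'.toAlgHom.comp Φ
    have hΦ : ∀ (x : E) (a : U) (b : U'), Φ x (a + b) = φ x a + φ' x b := by
      intro x a b
      have : e.symm (a + b) = (a, b) := e.symm_apply_eq.mpr rfl
      change e ((φ x).prodMap (φ' x) (e.symm (a + b))) = _
      rw [this]
      rfl
    have hinj : Function.Injective Ψ := Ψ.toRingHom.injective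
    let r := AlgEquiv.ofInjective Ψ hinj
    refine ⟨Ψ.range.toSubring, ?_, ?_, fun a => Ψ.range.algebraMap_mem a, ?_⟩
    · exact r.symm.toMulEquiv.isField (Field.toIsField E)
    · rw [← Nat.card_eq_fintype_card, ← FiniteField.natCard_extension F p ℓ]
      exact (Nat.card_congr r.toEquiv).symm
    · rintro _ ⟨x, rfl⟩
      have hcx : t.mulVecLin * Φ x = Φ x * t.mulVecLin := by
        refine LinearMap.ext fun v => ?_
        obtain ⟨a, ha, b, hb, rfl⟩ : ∃ a ∈ U, ∃ b ∈ U', a + b = v :=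
          Submodule.mem_sup.mp (hcompl.sup_eq_top ▸ Submodule.mem_top)
        have h1 := congrArg Subtype.val (LinearMap.congr_fun (hφ x).eq ⟨a, ha⟩)
        have h2 := congrArg Subtype.val (LinearMap.congr_fun (hφ' x).eq ⟨b, hb⟩)
        have h3 := hΦ x ⟨a, ha⟩ ⟨b, hb⟩
        have h4 := hΦ x ⟨_, hU a ha⟩ ⟨_, hU' b hb⟩
        rw [Module.End.mul_apply, Module.End.mul_apply, h3, map_add, map_add, h4]
        exact congrArg₂ (· + ·) h1 h2
      have := congrArg LinearMap.toMatrixAlgEquiv' hcx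
      rw [map_mul, map_mul] at this
      have ht : LinearMap.toMatrixAlgEquiv' t.mulVecLin = t :=
        LinearMap.toMatrixAlgEquiv'_toLinAlgEquiv' t
      rwa [ht] at this
end
end

section
/- Let q be a prime power, let n ≥ 1 and 1 ≤ k < n/2, and let t ∈ M_n(q) be an element of type T_k stabilizing a k-dimensional subspace U of F_q^n (i.e., F_q^n = U ⊕ U′ is a t-invariant decomposition with t|_U invertible of order q^k − 1 and t|_{U′} invertible of order q^{n−k} − 1). Let F_r be a proper subfield of F_q, so q = r^b with b ≥ 2. Then for every g ∈ GL(n,q), the conjugate g t g^{-1} does not lie in M_n(r) (viewing M_n(r) ⊆ M_n(q) entrywise). -/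
/-!
Only the summand `U'` matters. Write `m = n - k`, `r = |F_r|`, and suppose that `t` is conjugate to
a matrix `M` with entries in `F_r`. By Cayley–Hamilton every power of `M` is an `F_r`-combination
of `1, M, …, M ^ (n - 1)`, so `F_r[M]` has at most `r ^ n` elements. On the other hand `t|_{U'}` is
a unit of order `q ^ m - 1`, so `M` has at least `q ^ m - 1` distinct powers, none of them zero;
together with `0` this gives `q ^ m ≤ r ^ n`. As `q ≥ r ^ 2`, it follows that `2 * m ≤ n`, against
`2 * k < n`.
-/

open scoped Classical

noncomputable section

/-- If `0, 1, M, …, M ^ (N - 1)` are distinct, then `N + 1` is at most the number of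
`K`-combinations of `1, M, …, M ^ (n - 1)`. -/
lemma succ_le_card_pow_of_pow_injOn {K : Type*} [Field K] [Fintype K] {n N : ℕ}
    (M : Matrix (Fin n) (Fin n) K) (h0 : ∀ i, M ^ i ≠ 0)
    (hinj : Set.InjOn (fun i : ℕ => M ^ i) (Finset.range N)) :
    N + 1 ≤ Fintype.card K ^ n := by
  have hsub : insert 0 ((Finset.range N).image (fun i : ℕ => M ^ i)) ⊆
      (Finset.univ : Finset (Fin n → K)).image (fun c => ∑ j : Fin n, c j • M ^ (j : ℕ)) := by
    intro x hx
    rw [Finset.mem_insert, Finset.mem_image] at hx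
    rw [Finset.mem_image]
    rcases hx with rfl | ⟨i, -, rfl⟩
    · exact ⟨0, Finset.mem_univ _, by simp⟩
    · refine ⟨fun j => (Polynomial.X ^ i %ₘ M.charpoly).coeff j, Finset.mem_univ _, ?_⟩
      rw [Matrix.pow_eq_aeval_mod_charpoly M i]
      have hdeg : (Polynomial.X ^ i %ₘ M.charpoly).degree < (n : ℕ) := by
        have h := Polynomial.degree_modByMonic_lt (Polynomial.X ^ i) M.charpoly_monic
        rwa [Matrix.charpoly_degree_eq_dim, Fintype.card_fin] at h
      rw [Polynomial.aeval_def, Polynomial.eval₂_eq_sum,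
        ← Polynomial.sum_fin _ (by simp) hdeg]
      simp [Algebra.smul_def]
  have hcard := Finset.card_le_card hsub
  rw [Finset.card_insert_of_notMem (by simpa using fun i _ => h0 i),
    Finset.card_image_of_injOn hinj, Finset.card_range] at hcard
  exact hcard.trans (Finset.card_image_le.trans (by simp))

/-- A proper subfield of a finite field satisfies `|F_r| ^ 2 ≤ |F|`. -/
lemma card_subfield_sq_le {F : Type*} [Field F] [Fintype F] (K : Subfield F) (hK : K ≠ ⊤) :
    Fintype.card K ^ 2 ≤ Fintype.card F := by
  rw [Module.card_eq_pow_finrank (K := K) (V := F)]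
  refine Nat.pow_le_pow_right Fintype.card_pos ?_
  have hpos : 0 < Module.finrank K F := Module.finrank_pos
  have hne : Module.finrank K F ≠ 1 := by
    intro h1
    apply hK
    rw [eq_top_iff]
    intro x _
    have hbot := Subalgebra.bot_eq_top_of_finrank_eq_one h1
    have hx : x ∈ (⊥ : Subalgebra K F) := hbot ▸ Algebra.mem_top
    obtain ⟨y, rfl⟩ := Algebra.mem_bot.mp hx
    exact y.2
  omega

set_option synthInstance.maxHeartbeats 1000000 in
/-- part of Lemma 5.1: no `GL(n,q)`-conjugate of a matrix `t` of type
`T_k` has all entries in a proper subfield `F_r` of `F_q`. -/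
theorem typeTk_not_conjugate_into_subfield
    (q n k : ℕ) (hq : IsPrimePow q) (hn : 1 ≤ n) (hk1 : 1 ≤ k) (hk2 : 2 * k < n)
    (F : Type) [Field F] [Fintype F] (hF : Fintype.card F = q)
    (t : Matrix (Fin n) (Fin n) F)
    (U U' : Submodule F (Fin n → F)) (hcompl : IsCompl U U')
    (hdimU : Module.finrank F U = k) (hdimU' : Module.finrank F U' = n - k)
    (hU : ∀ x ∈ U, t.mulVecLin x ∈ U) (hU' : ∀ x ∈ U', t.mulVecLin x ∈ U')
    (hunitU : IsUnit (t.mulVecLin.restrict hU))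
    (hordU : orderOf (t.mulVecLin.restrict hU) = q ^ k - 1)
    (hunitU' : IsUnit (t.mulVecLin.restrict hU'))
    (hordU' : orderOf (t.mulVecLin.restrict hU') = q ^ (n - k) - 1)
    (Fr : Subfield F) (hFr : Fr ≠ ⊤) :
    ∀ g : GL (Fin n) F,
      ¬ ∀ i j : Fin n, ((g : Matrix (Fin n) (Fin n) F) * t *
        ((g⁻¹ : GL (Fin n) F) : Matrix (Fin n) (Fin n) F)) i j ∈ Fr := by
  intro g hg
  let M : Matrix (Fin n) (Fin n) Fr := fun i j => ⟨_, hg i j⟩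
  have hM : Fr.subtype.mapMatrix M = (g : Matrix (Fin n) (Fin n) F) * t *
      ((g⁻¹ : GL (Fin n) F) : Matrix (Fin n) (Fin n) F) := rfl
  have hMpow (i : ℕ) : Fr.subtype.mapMatrix (M ^ i) = (g : Matrix (Fin n) (Fin n) F) * t ^ i *
      ((g⁻¹ : GL (Fin n) F) : Matrix (Fin n) (Fin n) F) := by
    rw [map_pow, hM, Units.conj_pow]
  set f := t.mulVecLin.restrict hU' with hf
  have hfpow (i : ℕ) (x : U') : ((f ^ i) x : Fin n → F) = (t ^ i).mulVecLin x := by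
    induction i with
    | zero => simp
    | succ i ih =>
      rw [pow_succ', pow_succ', Matrix.mulVecLin_mul, LinearMap.comp_apply, ← ih]
      rfl
  have hpow_eq {i j : ℕ} (h : M ^ i = M ^ j) : f ^ i = f ^ j := by
    have h1 := congrArg Fr.subtype.mapMatrix h
    rw [hMpow, hMpow, Units.mul_left_inj, Units.mul_right_inj] at h1
    ext1 x
    exact Subtype.ext (by rw [hfpow, hfpow, h1])
  have : Nontrivial U' := Module.nontrivial_of_finrank_pos (R := F) (by omega)
  have h0 (i : ℕ) : M ^ i ≠ 0 := by
    intro h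
    have h1 := hMpow i
    rw [h, map_zero, eq_comm, Units.mul_left_eq_zero, Units.mul_right_eq_zero] at h1
    apply (hunitU'.pow i).ne_zero
    ext1 x
    exact Subtype.ext (by rw [hfpow, h1]; simp)
  have hinj : Set.InjOn (fun i : ℕ => M ^ i) (Finset.range (q ^ (n - k) - 1)) := by
    intro i hi j hj h
    rw [Finset.mem_coe, Finset.mem_range, ← hordU'] at hi hj
    exact pow_injOn_Iio_orderOf hi hj (hpow_eq h)
  have hle := succ_le_card_pow_of_pow_injOn M h0 hinj
  rw [Nat.sub_add_cancel (Nat.one_le_pow _ _ hq.pos)] at hle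
  have hsq := card_subfield_sq_le Fr hFr
  rw [hF] at hsq
  have hfin : Fintype.card Fr ^ (2 * (n - k)) ≤ Fintype.card Fr ^ n := by
    rw [pow_mul]
    exact (Nat.pow_le_pow_left hsq _).trans hle
  have := (Nat.pow_le_pow_iff_right Fintype.one_lt_card).mp hfin
  omega
end
end

section
/- Let n ≥ 2, let 1 ≤ d ≤ n, let m ≥ 1 be a common divisor of n and d, and let q be a prime power. Then |GL(d,q)| ≥ q^{d(d−1)(m−1)/m} · |GL(d/m, q^m)|, where |GL(N,Q)| = ∏_{k=0}^{N−1} (Q^N − Q^k). -/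
/-!
Write `d = m * e`. Since `(q ^ m) ^ e - (q ^ m) ^ j = q ^ d - q ^ (m * j)`, the factors of
`|GL(e, q ^ m)|` are exactly the factors `q ^ d - q ^ k` of `|GL(d, q)|` with `m ∣ k`. There remain
`e * (m - 1)` factors, with `m ∤ k`, and each of them is at least `q ^ (d - 1)` because `k ≤ d - 1`
and `q ≥ 2`. Their product is thus at least `q ^ ((d - 1) * e * (m - 1))`, and this exponent equals
`d * (d - 1) * (m - 1) / m`.
-/

open scoped Classical

noncomputable section

/-- Among the indices `k < (s + 1) * e`, the `s * e` that are not multiples of `s + 1` each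
contribute a factor at least `B`. -/
theorem pow_mul_prod_multiples_le (f : ℕ → ℕ) (B s e : ℕ)
    (h : ∀ k < (s + 1) * e, B ≤ f k) :
    B ^ (s * e) * ∏ j ∈ Finset.range e, f ((s + 1) * j) ≤
      ∏ k ∈ Finset.range ((s + 1) * e), f k := by
  induction e with
  | zero => simp
  | succ e ih =>
    have ih' := ih fun k hk => h k (by rw [Nat.mul_succ]; omega)
    rw [Finset.prod_range_succ, Nat.mul_succ (s + 1) e, Finset.prod_range_add,
      Finset.prod_range_succ', add_zero]
    have hblock : B ^ s ≤ ∏ i ∈ Finset.range s, f ((s + 1) * e + (i + 1)) := by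
      have := Finset.pow_card_le_prod (s := Finset.range s)
        (f := fun i => f ((s + 1) * e + (i + 1))) (n := B) fun i hi => by
          have := Finset.mem_range.1 hi
          exact h _ (by rw [Nat.mul_succ]; omega)
      simpa using this
    calc B ^ (s * (e + 1)) *
          ((∏ j ∈ Finset.range e, f ((s + 1) * j)) * f ((s + 1) * e))
        = (B ^ (s * e) * ∏ j ∈ Finset.range e, f ((s + 1) * j)) *
            (B ^ s * f ((s + 1) * e)) := by ring
      _ ≤ _ := by gcongr

theorem pow_pred_le_pow_sub_pow {q d k : ℕ} (hq : 2 ≤ q) (hk : k < d) :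
    q ^ (d - 1) ≤ q ^ d - q ^ k := by
  obtain ⟨c, rfl⟩ : ∃ c, d = c + 1 := ⟨d - 1, by omega⟩
  have h1 : q ^ k ≤ q ^ c := Nat.pow_le_pow_right (by omega) (by omega)
  have h2 : q ^ c * 2 ≤ q ^ (c + 1) := by
    rw [pow_succ]
    gcongr
  rw [Nat.add_sub_cancel]
  omega

/-- Lemma 5.2, second bound:
`|GL(d,q)| ≥ q^{d(d−1)(m−1)/m} · |GL(d/m, q^m)|`. -/
theorem GLcard_ge_pow_mul_GLcard
    (n d m q : ℕ) (hn : 2 ≤ n) (hd1 : 1 ≤ d) (hdn : d ≤ n) (hm : 1 ≤ m)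
    (hmn : m ∣ n) (hmd : m ∣ d) (hq : IsPrimePow q) :
    q ^ (d * (d - 1) * (m - 1) / m) * GLcard (d / m) (q ^ m) ≤ GLcard d q := by
  obtain ⟨e, rfl⟩ := hmd
  obtain ⟨s, rfl⟩ : ∃ s, m = s + 1 := ⟨m - 1, by omega⟩
  have hexp : (s + 1) * e * ((s + 1) * e - 1) * (s + 1 - 1) / (s + 1) =
      ((s + 1) * e - 1) * (s * e) := by
    rw [Nat.add_sub_cancel]
    exact Nat.div_eq_of_eq_mul_right hm (by ring)
  have key := pow_mul_prod_multiples_le (fun k => q ^ ((s + 1) * e) - q ^ k)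
    (q ^ ((s + 1) * e - 1)) s e fun k hk => pow_pred_le_pow_sub_pow hq.two_le hk
  rw [hexp, Nat.mul_div_cancel_left e hm, pow_mul]
  simpa only [GLcard, ← pow_mul] using key
end
end

section
/- Let n ≥ 5, let a be the smallest prime divisor of n, let 2 ≤ d < n − (n/a), let ℓ be a prime dividing both n and d, and let q be a prime power. Then binom(n/ℓ, d/ℓ)_q · |GL(d/ℓ, q^ℓ)| · |GL((n−d)/ℓ, q^ℓ)| · q^{(ℓ−1)² + 3} ≤ |GL(d,q)| · |GL(n−d, q)|. -/
/-!
Write `d = ℓ m` and `n - d = ℓ k`. The bound is a comparison of exponents of `q`: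
`|GL(N,Q)| ≤ Q^(N²)`, `|GL(N,q)| ≥ q^(N²)/4 ≥ q^(N²-2)` (because `∏ (1 - q⁻ⁱ) > 1/4` for `q ≥ 2`),
and the Gaussian binomial is at most `q^(k(m+1))`. So it suffices that
`k(m+1) + ℓ(m² + k²) + (ℓ-1)² + 7 ≤ ℓ²(m² + k²)`.

Since `n.minFac ≤ ℓ`, the hypothesis `d < n - n / n.minFac` gives `m + k < ℓ k`. It also rules out
`m = k = 1`, where `n = 2ℓ` has smallest prime divisor `2`. The exponent inequality then
holds except when `ℓ = 2`, `m = 1`, `k = 2`, i.e. `n = 6`, `d = 2`. There, cancelling common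
factors leaves `q² + q + 1 ≤ q (q-1)³ (q² + q + 1)`.
-/

open scoped Classical

noncomputable section

lemma gaussBinom_eq_zero_of_lt (q : ℕ) : ∀ {n k : ℕ}, n < k → gaussBinom q n k = 0
  | 0, k + 1, _ => by simp [gaussBinom]
  | n + 1, k + 1, h => by
    simp [gaussBinom, gaussBinom_eq_zero_of_lt q (show n < k by omega),
      gaussBinom_eq_zero_of_lt q (show n < k + 1 by omega)]

lemma gaussBinom_self (q n : ℕ) : gaussBinom q n n = 1 := by
  induction n with
  | zero => simp [gaussBinom]
  | succ n ih => simp [gaussBinom, ih, gaussBinom_eq_zero_of_lt q (Nat.lt_succ_self n)]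

/-- The true order of magnitude is `q ^ (m * k)`. The extra factor `q ^ k` lets both terms of the
Pascal recurrence be absorbed by a single factor `q ≥ 2`. -/
lemma gaussBinom_le {q : ℕ} (hq : 2 ≤ q) (m k : ℕ) :
    gaussBinom q (m + k) m ≤ q ^ (k * (m + 1)) := by
  induction m generalizing k with
  | zero => simpa [gaussBinom] using Nat.one_le_pow k q (by omega)
  | succ m ihm =>
    induction k with
    | zero => simp [gaussBinom_self]
    | succ k ihk =>
      have h1 := ihm (k + 1)
      have e : m + 1 + (k + 1) = (m + (k + 1)) + 1 := by ring
      rw [e, gaussBinom]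
      have e2 : m + (k + 1) = m + 1 + k := by ring
      have h2 : gaussBinom q (m + (k + 1)) (m + 1) ≤ q ^ (k * (m + 1 + 1)) := by
        rw [e2]; exact ihk
      have h3 : q ^ ((k + 1) * (m + 1)) ≤ q ^ (k * (m + 2) + (m + 1)) :=
        Nat.pow_le_pow_right (by omega) (by nlinarith)
      calc _ ≤ q ^ (k * (m + 2) + (m + 1)) + q ^ (m + 1) * q ^ (k * (m + 1 + 1)) :=
            add_le_add (h1.trans h3) (Nat.mul_le_mul_left _ h2)
        _ = 2 * q ^ (k * (m + 2) + (m + 1)) := by ring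
        _ ≤ q * q ^ (k * (m + 2) + (m + 1)) := Nat.mul_le_mul_right _ hq
        _ = _ := by ring

lemma GLcard_le (N Q : ℕ) : GLcard N Q ≤ Q ^ (N ^ 2) := by
  calc GLcard N Q ≤ ∏ _k ∈ Finset.range N, Q ^ N :=
        Finset.prod_le_prod' fun k _ => Nat.sub_le _ _
    _ = _ := by simp [← pow_mul, pow_two]

/-- The summand `t ^ N / 2` strengthens the bound `1/4` enough to make induction on `N` work. -/
lemma quarter_le_prod {t : ℝ} (h0 : 0 ≤ t) (h1 : t ≤ 1 / 2) (N : ℕ) :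
    1 / 4 + t ^ (N + 1) / 2 ≤ ∏ i ∈ Finset.range (N + 1), (1 - t ^ (i + 1)) := by
  induction N with
  | zero => simp; linarith
  | succ N ih =>
    rw [Finset.prod_range_succ]
    have hu0 : 0 ≤ t ^ (N + 1) := by positivity
    have hu : t ^ (N + 1) ≤ 1 / 2 := by
      calc t ^ (N + 1) ≤ t ^ 1 := pow_le_pow_of_le_one h0 (by linarith) (by omega)
        _ ≤ 1 / 2 := by simpa using h1
    have hs : t ^ (N + 1 + 1) = t * t ^ (N + 1) := by ring
    rw [hs]
    generalize t ^ (N + 1) = u at *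
    have htu : t * u ≤ 1 / 4 := by nlinarith
    have h2 : 0 ≤ 1 - t * u := by linarith
    calc 1 / 4 + t * u / 2 ≤ (1 / 4 + u / 2) * (1 - t * u) := by
          nlinarith [mul_nonneg hu0 (show 0 ≤ 1 - 3 / 2 * t - t * u by linarith)]
      _ ≤ _ := mul_le_mul_of_nonneg_right ih h2

lemma pow_sq_le_GLcard {q : ℕ} (hq : 2 ≤ q) (N : ℕ) : q ^ (N ^ 2) ≤ q ^ 2 * GLcard N q := by
  have hq0 : (0 : ℝ) < q := by positivity
  have hq2 : (2 : ℝ) ≤ q := by exact_mod_cast hq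
  have hcast : (GLcard N q : ℝ) =
      (q : ℝ) ^ (N ^ 2) * ∏ i ∈ Finset.range N, (1 - ((q : ℝ)⁻¹) ^ (i + 1)) := by
    have e : (q : ℝ) ^ (N ^ 2) = ∏ _i ∈ Finset.range N, (q : ℝ) ^ N := by
      simp [← pow_mul, pow_two]
    rw [GLcard, ← Finset.prod_range_reflect, e, ← Finset.prod_mul_distrib, Nat.cast_prod]
    refine Finset.prod_congr rfl fun i hi => ?_
    have hi := Finset.mem_range.1 hi
    rw [Nat.cast_sub (Nat.pow_le_pow_right (by omega) (by omega))]
    have e2 : (q : ℝ) ^ N = (q : ℝ) ^ (N - 1 - i) * (q : ℝ) ^ (i + 1) := by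
      rw [← pow_add]; congr 1; omega
    push_cast
    rw [mul_sub, mul_one]
    congr 1
    rw [e2, mul_assoc, ← mul_pow, mul_inv_cancel₀ hq0.ne', one_pow, mul_one]
  have hP : (1 / 4 : ℝ) ≤ ∏ i ∈ Finset.range N, (1 - ((q : ℝ)⁻¹) ^ (i + 1)) := by
    cases N with
    | zero => norm_num
    | succ N =>
      have ht : (q : ℝ)⁻¹ ≤ 1 / 2 := by
        rw [one_div]; exact inv_anti₀ (by norm_num) hq2
      have := quarter_le_prod (by positivity : (0 : ℝ) ≤ (q : ℝ)⁻¹) ht N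
      have h0 : (0 : ℝ) ≤ ((q : ℝ)⁻¹) ^ (N + 1) := by positivity
      linarith
  have : ((q ^ (N ^ 2) : ℕ) : ℝ) ≤ ((q ^ 2 * GLcard N q : ℕ) : ℝ) := by
    push_cast
    rw [hcast]
    have h4 : (4 : ℝ) ≤ (q : ℝ) ^ 2 := by nlinarith
    have hA : (0 : ℝ) ≤ (q : ℝ) ^ (N ^ 2) := by positivity
    have h1 : 1 ≤ (q : ℝ) ^ 2 * ∏ i ∈ Finset.range N, (1 - ((q : ℝ)⁻¹) ^ (i + 1)) := by
      nlinarith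
    calc (q : ℝ) ^ (N ^ 2) = (q : ℝ) ^ (N ^ 2) * 1 := (mul_one _).symm
      _ ≤ _ := mul_le_mul_of_nonneg_left h1 hA
      _ = _ := by ring
  exact_mod_cast this

/-- The case `n = 6`, `d = 2`, `ℓ = 2`, where the estimate by powers of `q` is too weak. -/
lemma bound_six_two {q : ℕ} (hq : 2 ≤ q) :
    gaussBinom q 3 1 * GLcard 1 (q ^ 2) * GLcard 2 (q ^ 2) * q ^ 4 ≤
      GLcard 2 q * GLcard 4 q := by
  have key : (1 + q + q ^ 2) * q ^ 4 ≤ (q ^ 2 - q) * (q ^ 4 - q) * (q ^ 4 - q ^ 3) := by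
    obtain ⟨p, rfl⟩ : ∃ p, q = p + 1 := ⟨q - 1, by omega⟩
    have hp : 1 ≤ p := by omega
    set q := p + 1 with hqp
    have e1 : q ^ 2 - q = q * p := Nat.sub_eq_of_eq_add (by rw [hqp]; ring)
    have e2 : q ^ 4 - q = q * p * (1 + q + q ^ 2) :=
      Nat.sub_eq_of_eq_add (by rw [hqp]; ring)
    have e3 : q ^ 4 - q ^ 3 = q ^ 3 * p := Nat.sub_eq_of_eq_add (by rw [hqp]; ring)
    rw [e1, e2, e3]
    have h1 : 1 ≤ q * p ^ 3 := Nat.mul_pos (by omega) (by positivity)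
    calc _ = (1 + q + q ^ 2) * q ^ 4 * 1 := by ring
      _ ≤ (1 + q + q ^ 2) * q ^ 4 * (q * p ^ 3) := Nat.mul_le_mul_left _ h1
      _ = _ := by ring
  have hB : gaussBinom q 3 1 = 1 + q + q ^ 2 := by simp [gaussBinom]; ring
  rw [hB]
  simp only [GLcard, Finset.prod_range_succ, Finset.prod_range_zero, pow_zero, pow_one, one_mul,
    ← pow_mul]
  norm_num
  calc _ = (1 + q + q ^ 2) * q ^ 4 * ((q ^ 2 - 1) * (q ^ 4 - 1) * (q ^ 4 - q ^ 2)) := by ring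
    _ ≤ _ := Nat.mul_le_mul_right _ key
    _ = _ := by ring

lemma exponent_le {ℓ m k : ℕ} (hℓ : 2 ≤ ℓ) (hm : 1 ≤ m) (hk : 1 ≤ k)
    (hmk : 3 ≤ m + k) (h2 : ℓ = 2 → 3 ≤ k) :
    k * (m + 1) + ℓ * m ^ 2 + ℓ * k ^ 2 + ((ℓ - 1) ^ 2 + 3) + 4 ≤
      (ℓ * m) ^ 2 + (ℓ * k) ^ 2 := by
  have hS : 5 ≤ m ^ 2 + k ^ 2 := by
    rcases (show 2 ≤ m ∨ 2 ≤ k by omega) with h | h <;> nlinarith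
  obtain ⟨s, rfl⟩ : ∃ s, ℓ = s + 2 := ⟨ℓ - 2, by omega⟩
  have e : s + 2 - 1 = s + 1 := by omega
  rw [e]
  rcases Nat.eq_zero_or_pos s with rfl | hs
  · have := h2 rfl
    zify at *
    nlinarith [sq_nonneg ((m : ℤ) - k)]
  · zify at *
    -- With `S = m² + k² ≥ 5`: `k(m+1) ≤ 2S` and `(s+1)² + 7 + 2S ≤ (s+2)(s+1)S`.
    have h1 : (k : ℤ) * (m + 1) ≤ 2 * ((m : ℤ) ^ 2 + k ^ 2) := by
      nlinarith [sq_nonneg ((m : ℤ) - k)]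
    have h3 : ((s : ℤ) + 1) ^ 2 + 7 + 2 * ((m : ℤ) ^ 2 + k ^ 2) ≤
        (s + 2) * (s + 1) * ((m : ℤ) ^ 2 + k ^ 2) := by
      generalize (m : ℤ) ^ 2 + k ^ 2 = S at *
      have : 0 ≤ ((s : ℤ) ^ 2 + 3 * s) * (S - 5) :=
        mul_nonneg (by positivity) (by linarith)
      nlinarith
    nlinarith

/-- Lemma 5.3:
`binom(n/ℓ, d/ℓ)_q · |GL(d/ℓ, q^ℓ)| · |GL((n−d)/ℓ, q^ℓ)| · q^{(ℓ−1)² + 3}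
  ≤ |GL(d,q)| · |GL(n−d, q)|`. -/
theorem gaussBinom_GLcard_bound
    (n d ℓ q : ℕ) (hn : 5 ≤ n) (hd2 : 2 ≤ d) (hd : d < n - n / n.minFac)
    (hℓ : ℓ.Prime) (hℓn : ℓ ∣ n) (hℓd : ℓ ∣ d) (hq : IsPrimePow q) :
    gaussBinom q (n / ℓ) (d / ℓ) * GLcard (d / ℓ) (q ^ ℓ) * GLcard ((n - d) / ℓ) (q ^ ℓ) *
        q ^ ((ℓ - 1) ^ 2 + 3) ≤
      GLcard d q * GLcard (n - d) q := by
  have hq2 : 2 ≤ q := hq.two_le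
  have hℓ2 := hℓ.two_le
  have hdn : d < n := lt_of_lt_of_le hd (Nat.sub_le _ _)
  obtain ⟨m, rfl⟩ := hℓd
  obtain ⟨k, hk⟩ : ℓ ∣ n - ℓ * m := Nat.dvd_sub hℓn (dvd_mul_right _ _)
  obtain rfl : n = ℓ * (m + k) := by rw [mul_add]; omega
  have hm1 : 1 ≤ m := Nat.pos_of_ne_zero (by rintro rfl; simp at hd2)
  have hk1 : 1 ≤ k := Nat.pos_of_ne_zero (by rintro rfl; simp at hdn)
  rw [hk, Nat.mul_div_cancel_left _ hℓ.pos, Nat.mul_div_cancel_left _ hℓ.pos,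
    Nat.mul_div_cancel_left _ hℓ.pos]
  have hmk : 3 ≤ m + k := by
    by_contra hlt
    obtain ⟨rfl, rfl⟩ : m = 1 ∧ k = 1 := by omega
    have h2 : (ℓ * (1 + 1)).minFac = 2 :=
      (Nat.minFac_eq_two_iff _).2 (dvd_mul_left 2 ℓ)
    rw [h2] at hd
    omega
  have hlt : m + k < ℓ * k := by
    have h1 : (ℓ * (m + k)).minFac ≤ ℓ := Nat.minFac_le_of_dvd hℓ2 (dvd_mul_right _ _)
    have h2 : ℓ * (m + k) / ℓ ≤ ℓ * (m + k) / (ℓ * (m + k)).minFac :=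
      Nat.div_le_div_left h1 (Nat.minFac_pos _)
    rw [Nat.mul_div_cancel_left _ hℓ.pos] at h2
    rw [mul_add] at *
    omega
  by_cases hex : ℓ = 2 ∧ k ≤ 2
  · obtain ⟨rfl, hk2⟩ := hex
    obtain ⟨rfl, rfl⟩ : m = 1 ∧ k = 2 := by omega
    exact bound_six_two hq2
  · have hE := exponent_le hℓ2 hm1 hk1 hmk (by omega)
    refine Nat.le_of_mul_le_mul_left ?_ (show 0 < q ^ 4 by positivity)
    have b1 := gaussBinom_le hq2 m k
    have b2 := GLcard_le m (q ^ ℓ)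
    have b3 := GLcard_le k (q ^ ℓ)
    calc _ ≤ q ^ 4 * (q ^ (k * (m + 1)) * (q ^ ℓ) ^ (m ^ 2) * (q ^ ℓ) ^ (k ^ 2) *
            q ^ ((ℓ - 1) ^ 2 + 3)) := by gcongr
      _ = q ^ (k * (m + 1) + ℓ * m ^ 2 + ℓ * k ^ 2 + ((ℓ - 1) ^ 2 + 3) + 4) := by
          rw [← pow_mul, ← pow_mul, ← pow_add, ← pow_add, ← pow_add, ← pow_add]
          congr 1; ring
      _ ≤ q ^ ((ℓ * m) ^ 2 + (ℓ * k) ^ 2) := Nat.pow_le_pow_right (by omega) hE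
      _ = q ^ ((ℓ * m) ^ 2) * q ^ ((ℓ * k) ^ 2) := pow_add _ _ _
      _ ≤ (q ^ 2 * GLcard (ℓ * m) q) * (q ^ 2 * GLcard (ℓ * k) q) :=
          Nat.mul_le_mul (pow_sq_le_GLcard hq2 _) (pow_sq_le_GLcard hq2 _)
      _ = _ := by ring
end
end

section
/- Let n ≥ 2, let a be the smallest prime divisor of n, and let q be any prime power. Then ∏_{k=1, a∤k}^{n−1} (q^n − q^k) ≥ a · q^{n(n − (n/a) − 1)}, where the product runs over the integers k with 1 ≤ k ≤ n−1 not divisible by a; equality holds if and only if (n,q) = (2,2) or (n,q) = (3,2). -/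
/-!
Pull a factor `q ^ n` out of each of the `n - n / a` terms and cancel all but one of them against
the power of `q` on the other side: the claim becomes `a ≤ q ^ n * ∏ (1 - q ^ (-(n - k)))`, over
the `1 ≤ k < n` not divisible by `a`. Each factor `1 - q ^ (-(n - k))` lies in `[0, 1]`, so the
product only gets smaller when it is taken over all `1 ≤ k < n`, and when `q` is replaced by `2`;
`prod_one_sub_half_ge` then bounds it below by `1 / 4 + 2 ^ (-n)`. Hence the right side is at
least `2 ^ n / 4 + 1 ≥ n ≥ a`. The bound `2 ^ n / 4 + 1 ≥ n` is strict for `n ≥ 4`, and replacing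
the leading `q ^ n` by `2 ^ n` is strict for `q > 2`, which leaves only `(2, 2)` and `(3, 2)` as
cases of equality.
-/

open scoped Classical

noncomputable section

/-- The bound `1 / 4 + 2 ^ (-(m + 1))`, rather than the plain `1 / 4`, is what makes the induction
close; it is sharp for `m = 1` and `m = 2`. -/
lemma prod_one_sub_half_ge (m : ℕ) (hm : 1 ≤ m) :
    (1 / 4 + (1 / 2) ^ (m + 1) : ℝ) ≤ ∏ j ∈ Finset.range m, (1 - (1 / 2 : ℝ) ^ (j + 1)) := by
  induction m, hm using Nat.le_induction with
  | base => norm_num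
  | succ m hm ih =>
    rw [Finset.prod_range_succ]
    have h0 : (0 : ℝ) < (1 / 2) ^ m := by positivity
    have h1 : (1 / 2 : ℝ) ^ m ≤ 1 / 2 := by
      simpa using pow_le_pow_of_le_one (by norm_num : (0 : ℝ) ≤ 1 / 2) (by norm_num) hm
    have h2 : (0 : ℝ) ≤ 1 - (1 / 2) ^ (m + 1) := by rw [pow_succ]; linarith
    refine le_trans ?_ (mul_le_mul_of_nonneg_right ih h2)
    simp only [pow_succ]
    nlinarith

lemma one_sub_inv_pow_bounds {q : ℝ} (hq : 2 ≤ q) (j : ℕ) :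
    0 ≤ 1 - (1 / 2 : ℝ) ^ j ∧ 1 - (1 / 2 : ℝ) ^ j ≤ 1 - q⁻¹ ^ j ∧ 1 - q⁻¹ ^ j ≤ 1 := by
  have h1 : q⁻¹ ≤ 1 / 2 := by
    rw [one_div]; exact inv_anti₀ (by norm_num) hq
  have h0 : 0 ≤ q⁻¹ := by positivity
  have h2 := pow_le_pow_left₀ h0 h1 j
  have h3 : (1 / 2 : ℝ) ^ j ≤ 1 := pow_le_one₀ (by norm_num) (by norm_num)
  have h4 : 0 ≤ q⁻¹ ^ j := by positivity
  exact ⟨by linarith, by linarith, by linarith⟩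

lemma quarter_add_le_prod {q : ℝ} (hq : 2 ≤ q) (n : ℕ) (hn : 2 ≤ n) (p : ℕ → Prop)
    [DecidablePred p] :
    1 / 4 + (1 / 2 : ℝ) ^ n ≤
      ∏ k ∈ (Finset.Ico 1 n).filter p, (1 - q⁻¹ ^ (n - k)) := by
  obtain ⟨m, rfl⟩ : ∃ m, n = m + 1 := ⟨n - 1, by omega⟩
  calc (1 / 4 + (1 / 2 : ℝ) ^ (m + 1))
      ≤ ∏ j ∈ Finset.range m, (1 - (1 / 2 : ℝ) ^ (j + 1)) :=
        prod_one_sub_half_ge m (by omega)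
    _ = ∏ k ∈ Finset.Ico 1 (m + 1), (1 - (1 / 2 : ℝ) ^ (m + 1 - k)) := by
        rw [Finset.prod_Ico_eq_prod_range, ← Finset.prod_range_reflect]
        refine Finset.prod_congr (by simp) fun j hj => ?_
        have := Finset.mem_range.1 hj
        congr 2
        omega
    _ ≤ ∏ k ∈ Finset.Ico 1 (m + 1), (1 - q⁻¹ ^ (m + 1 - k)) :=
        Finset.prod_le_prod (fun k _ => (one_sub_inv_pow_bounds hq _).1)
          fun k _ => (one_sub_inv_pow_bounds hq _).2.1
    _ ≤ _ := by
        rw [Finset.prod_filter]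
        refine Finset.prod_le_prod (fun k _ => ?_) fun k _ => ?_
        · have := one_sub_inv_pow_bounds hq (m + 1 - k)
          linarith
        · split_ifs
          · exact le_rfl
          · exact (one_sub_inv_pow_bounds hq _).2.2

lemma four_mul_lt_two_pow (n : ℕ) (hn : 4 ≤ n) : 4 * n < 2 ^ n + 4 := by
  induction n, hn using Nat.le_induction with
  | base => norm_num
  | succ n hn ih => rw [pow_succ]; omega

lemma card_filter_not_dvd (n a : ℕ) (hn : 1 ≤ n) (ha : a ∣ n) :
    ((Finset.Ico 1 n).filter (fun k => ¬ a ∣ k)).card = n - n / a := by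
  have h : (Finset.Ico 1 n).filter (fun k => ¬ a ∣ k)
      = (Finset.Ioc 0 n).filter (fun k => ¬ a ∣ k) := by
    ext k
    simp only [Finset.mem_filter, Finset.mem_Ico, Finset.mem_Ioc]
    refine ⟨fun ⟨h1, h2⟩ => ⟨by omega, h2⟩, fun ⟨h1, h2⟩ => ⟨⟨by omega, ?_⟩, h2⟩⟩
    rcases h1.2.lt_or_eq with h | rfl
    · exact h
    · exact absurd ha h2
  have h1 := Finset.card_filter_add_card_filter_not (s := Finset.Ioc 0 n) (fun k => a ∣ k)
  have h2 := Nat.Ioc_filter_dvd_card_eq_div n a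
  rw [h]
  simp only [Nat.card_Ioc] at h1
  have h3 : (Finset.filter (fun k => a ∣ k) (Finset.Ioc 0 n)).card = n / a := by
    convert h2
  omega

/-- The factorisation behind the estimate: one of the `n - n / a` factors `q ^ n` is kept apart. -/
lemma prod_factor (n q : ℕ) (hn : 2 ≤ n) (hq : 2 ≤ q) :
    ((∏ k ∈ (Finset.Ico 1 n).filter (fun k => ¬ n.minFac ∣ k), (q ^ n - q ^ k) : ℕ) : ℝ) =
      (q : ℝ) ^ n * (∏ k ∈ (Finset.Ico 1 n).filter (fun k => ¬ n.minFac ∣ k),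
        (1 - (q : ℝ)⁻¹ ^ (n - k))) * (q : ℝ) ^ (n * (n - n / n.minFac - 1)) := by
  have hq0 : (q : ℝ) ≠ 0 := by positivity
  have hlt : n / n.minFac < n :=
    Nat.div_lt_self (by omega) (Nat.minFac_prime (by omega)).one_lt
  have h1 : ∀ k ∈ (Finset.Ico 1 n).filter (fun k => ¬ n.minFac ∣ k),
      ((q ^ n - q ^ k : ℕ) : ℝ) = (q : ℝ) ^ n * (1 - (q : ℝ)⁻¹ ^ (n - k)) := by
    intro k hk
    have hk' : k ≤ n := (Finset.mem_Ico.1 (Finset.mem_filter.1 hk).1).2.le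
    rw [Nat.cast_sub (Nat.pow_le_pow_right (by omega) hk')]
    push_cast
    rw [mul_sub, mul_one, inv_pow]
    congr 1
    rw [eq_mul_inv_iff_mul_eq₀ (by positivity), ← pow_add]
    congr 1
    omega
  rw [Nat.cast_prod, Finset.prod_congr rfl h1, Finset.prod_mul_distrib, Finset.prod_const,
    card_filter_not_dvd n _ (by omega) (Nat.minFac_dvd n)]
  obtain ⟨c, hc⟩ : ∃ c, n - n / n.minFac = c + 1 := ⟨n - n / n.minFac - 1, by omega⟩
  rw [hc, Nat.add_sub_cancel, ← pow_mul, mul_add, mul_one, pow_add]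
  ring

lemma le_pow_mul_quarter_add {q n : ℕ} (hn : 2 ≤ n) (hq : 2 ≤ q) :
    (n : ℝ) ≤ (q : ℝ) ^ n * (1 / 4 + (1 / 2) ^ n) ∧
    (¬ ((n = 2 ∧ q = 2) ∨ (n = 3 ∧ q = 2)) →
      (n : ℝ) < (q : ℝ) ^ n * (1 / 4 + (1 / 2) ^ n)) := by
  have hpos : (0 : ℝ) < 1 / 4 + (1 / 2) ^ n := by positivity
  have h2 : (2 : ℝ) ^ n * (1 / 4 + (1 / 2) ^ n) = 2 ^ n / 4 + 1 := by
    rw [mul_add, ← mul_pow]; norm_num; ring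
  have hlt : 4 ≤ n → (n : ℝ) < 2 ^ n / 4 + 1 := fun h => by
    have : (4 * n : ℝ) < 2 ^ n + 4 := by exact_mod_cast four_mul_lt_two_pow n h
    linarith
  have hle : (n : ℝ) ≤ 2 ^ n / 4 + 1 := by
    rcases (by omega : n = 2 ∨ n = 3 ∨ 4 ≤ n) with rfl | rfl | h
    · norm_num
    · norm_num
    · exact (hlt h).le
  rcases hq.eq_or_lt with rfl | hq'
  · rw [Nat.cast_ofNat, h2]
    refine ⟨hle, fun h => hlt ?_⟩
    simp only [and_true, not_or] at h
    omega
  · have hq2 : (2 : ℝ) < q := by exact_mod_cast hq'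
    have : (2 : ℝ) ^ n < (q : ℝ) ^ n := pow_lt_pow_left₀ hq2 (by norm_num) (by omega)
    have := mul_lt_mul_of_pos_right this hpos
    exact ⟨by linarith, fun _ => by linarith⟩

/-- Lemma 5.6: for `n ≥ 2`, `a` the smallest prime divisor of `n`, and any
prime power `q`, `∏_{1 ≤ k ≤ n−1, a ∤ k} (q^n − q^k) ≥ a · q^{n(n − n/a − 1)}`, with equality
iff `(n,q) = (2,2)` or `(3,2)`. -/
theorem prod_pow_sub_pow_ge
    (n q : ℕ) (hn : 2 ≤ n) (hq : IsPrimePow q) :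
    n.minFac * q ^ (n * (n - n / n.minFac - 1)) ≤
        ∏ k ∈ (Finset.Ico 1 n).filter (fun k => ¬ n.minFac ∣ k), (q ^ n - q ^ k) ∧
    ((∏ k ∈ (Finset.Ico 1 n).filter (fun k => ¬ n.minFac ∣ k), (q ^ n - q ^ k)) =
        n.minFac * q ^ (n * (n - n / n.minFac - 1)) ↔ (n = 2 ∧ q = 2) ∨ (n = 3 ∧ q = 2)) := by
  have hq2 : 2 ≤ q := hq.two_le
  have hqR : (2 : ℝ) ≤ q := by exact_mod_cast hq2
  have hE : (0 : ℝ) < (q : ℝ) ^ (n * (n - n / n.minFac - 1)) := by positivity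
  have hP := mul_le_mul_of_nonneg_left
    (quarter_add_le_prod hqR n hn (fun k => ¬ n.minFac ∣ k))
    (by positivity : (0 : ℝ) ≤ (q : ℝ) ^ n)
  have ha : (n.minFac : ℝ) ≤ n := by exact_mod_cast Nat.minFac_le (by omega)
  obtain ⟨hle, hlt⟩ := le_pow_mul_quarter_add hn hq2
  have hfac := prod_factor n q hn hq2
  refine ⟨?_, fun heq => ?_, ?_⟩
  · rw [← Nat.cast_le (α := ℝ), hfac]
    push_cast
    exact mul_le_mul_of_nonneg_right (by linarith) hE.le
  · by_contra hne
    rw [heq] at hfac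
    push_cast at hfac
    have := mul_right_cancel₀ hE.ne' hfac
    linarith [hlt hne]
  · rintro (⟨rfl, rfl⟩ | ⟨rfl, rfl⟩)
    · rw [Finset.prod_filter]
      norm_num [Finset.prod_Ico_succ_top]
    · rw [Finset.prod_filter]
      norm_num [Finset.prod_Ico_succ_top, Nat.prime_three.minFac_eq]
end
end
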